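/- arXiv:2511.04891 — 3 statements merged into one kernel-verified Lean document; each statement's English description precedes it below -/
import Mathlib

section
/- For any number n of agents with additive utilities over a finite set M of indivisible items (where each item may be a good for some agents and a chore for others) and with utilities over the cake C = [0,1] given by nonnegative integrable density functions, there exists an allocation {(A_i, C_i)}_{i∈N} — where (A_1,…,A_n) is a partition of M and (C_1,…,C_n) is a partition of [0,1] into measurable sets — that is envy-free for mixed resources (EFM). -/
open MeasureTheory

/-! The indivisible items are allocated first, so that the allocation is EF1 and no permutation of
the bundles increases welfare. An item that some agent likes is a good, any other item a chore. If
some agent still likes a good `g` after a chore `c` is added to it, glue `c` to `g`. Otherwise hand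
out `#K % n` of the chores `K`, together with at most as many goods, in one round of maximum
welfare. The remaining chores go out in full rounds of maximum welfare and the remaining goods in
rounds where every agent gets at most one; maximality makes each round undo the envy left by the
items of later rounds.

Welfare-optimality of the bundles gives potentials `p` with `V i j + p j ≤ V i i + p i`. Raising a
water level `c` until `∑ i, max (p i - c) 0 = 1` turns the potentials into shares of the cake, and
nobody envies an agent who receives a positive share. Finally, the cake is cut so that all agents
agree that the pieces have these shares. For this, nested sets are interpolated linearly by repeated
bisection, with respect to more and more densities: along an interpolation that is linear for the
previous ones, the intermediate value theorem finds a window of length `1 / 2` that halves the next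
one too. -/

namespace EFM

open Filter Topology
open scoped Function

/-- Envy-freeability of an allocation with values `V i j` (agent `i`'s value for agent `j`'s
bundle), in its welfare form: no permutation of the bundles increases the total value. -/
def IsEnvyFreeable {N : Type*} [Fintype N] (V : N → N → ℝ) : Prop :=
  ∀ σ : Equiv.Perm N, ∑ i, V i (σ i) ≤ ∑ i, V i i

section Potentials

variable {N : Type*} [Fintype N] {V : N → N → ℝ}

lemma IsEnvyFreeable.sum_mul_le_of_mem_doublyStochastic [DecidableEq N] (hV : IsEnvyFreeable V)
    {D : Matrix N N ℝ} (hD : D ∈ doublyStochastic ℝ N) :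
    ∑ i, ∑ j, D i j * V i j ≤ ∑ i, V i i := by
  obtain ⟨w, hw_nonneg, hw_sum, rfl⟩ := exists_eq_sum_perm_of_mem_doublyStochastic hD
  calc ∑ i, ∑ j, (∑ σ, w σ • σ.permMatrix ℝ) i j * V i j
      = ∑ i, ∑ σ, w σ * V i (σ i) := by
        refine Finset.sum_congr rfl fun i _ => ?_
        simp only [Matrix.sum_apply, Finset.sum_mul]
        rw [Finset.sum_comm]
        simp [Equiv.Perm.permMatrix, PEquiv.toMatrix_apply]
    _ = ∑ σ, w σ * ∑ i, V i (σ i) := by rw [Finset.sum_comm]; simp only [Finset.mul_sum]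
    _ ≤ ∑ σ, w σ * ∑ i, V i i :=
        Finset.sum_le_sum fun σ _ => mul_le_mul_of_nonneg_left (hV σ) (hw_nonneg σ)
    _ = ∑ i, V i i := by rw [← Finset.sum_mul, hw_sum, one_mul]

lemma sum_apply_update_id [DecidableEq N] (h : N → N → ℝ) (a b : N) :
    ∑ i, h i (Function.update id a b i) = ∑ i, h i i + (h a b - h a a) := by
  have hpoint (i : N) :
      h i (Function.update id a b i) = h i i + if i = a then h a b - h a a else 0 := by
    by_cases hi : i = a <;> simp [hi]
  simp [hpoint, Finset.sum_add_distrib]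

/-- Averaging the maps `g k` gives a doubly stochastic matrix. -/
lemma IsEnvyFreeable.sum_sum_apply_le [DecidableEq N] {κ : Type*} [Fintype κ]
    (hV : IsEnvyFreeable V) (g : κ → N → N)
    (hg : ∀ j, ∑ k, ∑ i, (if g k i = j then (1 : ℝ) else 0) = Fintype.card κ) :
    ∑ k, ∑ i, V i (g k i) ≤ Fintype.card κ * ∑ i, V i i := by
  cases isEmpty_or_nonempty κ
  · simp
  have hcard : (0 : ℝ) < Fintype.card κ := by exact_mod_cast Fintype.card_pos
  let D : Matrix N N ℝ := fun i j => (∑ k, if g k i = j then 1 else 0) / Fintype.card κ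
  have hD : D ∈ doublyStochastic ℝ N := by
    refine mem_doublyStochastic_iff_sum.2 ⟨fun i j => by positivity, fun i => ?_, fun j => ?_⟩
    · rw [← Finset.sum_div, Finset.sum_comm]
      simp [hcard.ne']
    · rw [← Finset.sum_div, Finset.sum_comm, hg, div_self hcard.ne']
  have hD_sum : ∑ i, ∑ j, D i j * V i j = (∑ k, ∑ i, V i (g k i)) / Fintype.card κ := by
    rw [Finset.sum_comm (γ := κ), Finset.sum_div]
    refine Finset.sum_congr rfl fun i _ => ?_
    simp only [D, div_mul_eq_mul_div, Finset.sum_mul, ← Finset.sum_div]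
    rw [Finset.sum_comm]
    simp
  rw [← div_le_iff₀' hcard, ← hD_sum]
  exact hV.sum_mul_le_of_mem_doublyStochastic hD

/-- The map that sends `s k` to `s (τ k)` and fixes all other agents is not a permutation, but the
average of these maps over `k` is doubly stochastic. -/
lemma IsEnvyFreeable.sum_apply_perm_le {κ : Type*} [Fintype κ] (hV : IsEnvyFreeable V)
    (s : κ → N) (τ : Equiv.Perm κ) :
    ∑ k, V (s k) (s (τ k)) ≤ ∑ k, V (s k) (s k) := by
  classical
  have hcover (j : N) :
      ∑ k, ∑ i, (if Function.update id (s k) (s (τ k)) i = j then (1 : ℝ) else 0)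
        = Fintype.card κ := by
    have hshift : ∑ k, (if s (τ k) = j then (1 : ℝ) else 0) = ∑ k, if s k = j then 1 else 0 :=
      Equiv.sum_comp τ fun k => if s k = j then (1 : ℝ) else 0
    simp only [sum_apply_update_id fun _ i => if i = j then (1 : ℝ) else 0,
      Finset.sum_add_distrib, Finset.sum_sub_distrib, hshift]
    simp
  have hsum := hV.sum_sum_apply_le (fun k => Function.update id (s k) (s (τ k))) hcover
  simp only [sum_apply_update_id V, Finset.sum_add_distrib, Finset.sum_sub_distrib,
    Finset.sum_const, Finset.card_univ, nsmul_eq_mul] at hsum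
  linarith

/-- Total envy along the walk `s 0, s 1, …, s m` in the envy graph, whose edge from `i` to `j` has
weight `V i j - V i i`. -/
def walkEnvy (V : N → N → ℝ) {m : ℕ} (s : Fin (m + 1) → N) : ℝ :=
  ∑ k : Fin m, (V (s k.castSucc) (s k.succ) - V (s k.castSucc) (s k.castSucc))

lemma walkEnvy_cons {N : Type*} (V : N → N → ℝ) (i : N) {m : ℕ} (s : Fin (m + 1) → N) :
    walkEnvy V (Fin.cons i s : Fin (m + 2) → N) = V i (s 0) - V i i + walkEnvy V s := by
  simp only [walkEnvy, Fin.sum_univ_succ (n := m)]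
  simp

lemma IsEnvyFreeable.walkEnvy_le (hV : IsEnvyFreeable V) {m : ℕ} (s : Fin (m + 1) → N) :
    walkEnvy V s ≤ V (s (Fin.last m)) (s (Fin.last m)) - V (s (Fin.last m)) (s 0) := by
  have hclosed := hV.sum_apply_perm_le s (finRotate (m + 1))
  simp only [Fin.sum_univ_castSucc, finRotate_apply, Fin.last_add_one,
    Fin.coeSucc_eq_succ] at hclosed
  simp only [walkEnvy, Finset.sum_sub_distrib]
  linarith

lemma IsEnvyFreeable.exists_potential (hV : IsEnvyFreeable V) :
    ∃ p : N → ℝ, ∀ i j, V i j + p j ≤ V i i + p i := by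
  let envies (i : N) : Set ℝ := {x | ∃ (m : ℕ) (s : Fin (m + 1) → N), s 0 = i ∧ walkEnvy V s = x}
  have hbdd (i : N) : BddAbove (envies i) := by
    obtain ⟨b, hb⟩ := (Set.finite_range fun j => V j j - V j i).bddAbove
    refine ⟨b, ?_⟩
    rintro _ ⟨m, s, rfl, rfl⟩
    exact (hV.walkEnvy_le s).trans (hb ⟨_, rfl⟩)
  have hnonempty (i : N) : (envies i).Nonempty := ⟨_, 0, fun _ => i, rfl, rfl⟩
  refine ⟨fun i => sSup (envies i), fun i j => ?_⟩
  suffices sSup (envies j) ≤ sSup (envies i) - (V i j - V i i) by linarith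
  refine csSup_le (hnonempty j) ?_
  rintro _ ⟨m, s, rfl, rfl⟩
  rw [le_sub_iff_add_le']
  exact le_csSup (hbdd i) ⟨m + 1, Fin.cons i s, rfl, walkEnvy_cons V i s⟩

lemma exists_sum_max_sub_eq [Nonempty N] (p : N → ℝ) {r : ℝ} (hr : 0 ≤ r) :
    ∃ c, ∑ i, max (p i - c) 0 = r := by
  refine mem_range_of_exists_le_of_exists_ge (f := fun c => ∑ i, max (p i - c) 0)
    (by fun_prop) ?_ ?_
  · obtain ⟨c, hc⟩ := (Set.finite_range p).bddAbove
    refine ⟨c, (Finset.sum_eq_zero fun i _ => max_eq_right ?_).trans_le hr⟩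
    linarith [hc ⟨i, rfl⟩]
  · obtain ⟨i₀⟩ := ‹Nonempty N›
    refine ⟨p i₀ - r, ?_⟩
    calc r ≤ max (p i₀ - (p i₀ - r)) 0 := by simp
      _ ≤ _ := Finset.single_le_sum (f := fun i => max (p i - (p i₀ - r)) 0)
        (fun i _ => le_max_right _ _) (Finset.mem_univ i₀)

lemma IsEnvyFreeable.exists_shares [Nonempty N] (hV : IsEnvyFreeable V) {r : ℝ}
    (hr : 0 ≤ r) :
    ∃ x : N → ℝ, (∀ j, 0 ≤ x j) ∧ ∑ j, x j = r ∧
      ∀ i j, x j ≠ 0 → V i j + x j ≤ V i i + x i := by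
  obtain ⟨p, hp⟩ := hV.exists_potential
  obtain ⟨c, hc⟩ := exists_sum_max_sub_eq p hr
  refine ⟨fun j => max (p j - c) 0, fun j => le_max_right _ _, hc, fun i j hj => ?_⟩
  have hpj : 0 < p j - c := by
    by_contra! h
    exact hj (max_eq_right h)
  calc V i j + max (p j - c) 0 = V i j + p j - c := by rw [max_eq_left hpj.le, add_sub_assoc]
    _ ≤ V i i + (p i - c) := by linarith [hp i j]
    _ ≤ V i i + max (p i - c) 0 := by gcongr; exact le_max_left _ _

end Potentials

lemma IsEnvyFreeable.add {N : Type*} [Fintype N] {V W : N → N → ℝ} (hV : IsEnvyFreeable V)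
    (hW : IsEnvyFreeable W) : IsEnvyFreeable fun i j => V i j + W i j := fun σ => by
  simpa only [Finset.sum_add_distrib] using add_le_add (hV σ) (hW σ)

lemma exists_isEnvyFreeable_forall_update_le {N β : Type*} [Fintype N] [DecidableEq N] [Finite β]
    (w : N → β → ℝ) {P : Set (N → β)} (hne : P.Nonempty)
    (hperm : ∀ A ∈ P, ∀ σ : Equiv.Perm N, A ∘ σ ∈ P) :
    ∃ A ∈ P, IsEnvyFreeable (fun i j => w i (A j)) ∧
      ∀ i b, Function.update A i b ∈ P → w i b ≤ w i (A i) := by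
  obtain ⟨A, hA, hmax⟩ := Set.exists_max_image P (fun A => ∑ i, w i (A i)) P.toFinite hne
  refine ⟨A, hA, fun σ => hmax _ (hperm A hA σ), fun i b hb => ?_⟩
  have hwelfare := hmax _ hb
  rw [← Finset.add_sum_erase _ _ (Finset.mem_univ i),
    ← Finset.add_sum_erase _ _ (Finset.mem_univ i), Function.update_self,
    Finset.sum_congr rfl fun j hj => by
      rw [Function.update_of_ne (Finset.ne_of_mem_erase hj)]] at hwelfare
  linarith

/-- Agent `i`'s value for agent `j`'s bundle. -/
def bundleValue {N I : Type*} (u : N → I → ℝ) (A : N → Finset I) (i j : N) : ℝ :=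
  ∑ t ∈ A j, u i t

/-- The bundles `A j` partition the set `M` of items. -/
structure IsAllocation {N I : Type*} (A : N → Finset I) (M : Finset I) : Prop where
  disjoint : Pairwise (Disjoint on A)
  mem_iff (t : I) : t ∈ M ↔ ∃ j, t ∈ A j

/-- Every agent gets at most one item of `M`, and no item is given twice. The agents' items are
encoded as sets of cardinality at most one. -/
structure IsMatching {N I : Type*} (φ : N → Finset I) (M : Finset I) : Prop where
  disjoint : Pairwise (Disjoint on φ)
  subset (i : N) : φ i ⊆ M
  card_le_one (i : N) : (φ i).card ≤ 1

lemma bundleValue_of_eq_empty {N I : Type*} {u : N → I → ℝ} {A : N → Finset I} {i j : N}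
    (hj : A j = ∅) : bundleValue u A i j = 0 := by
  rw [bundleValue, hj, Finset.sum_empty]

lemma bundleValue_of_eq_singleton {N I : Type*} {u : N → I → ℝ} {A : N → Finset I} {i j : N}
    {t : I} (hj : A j = {t}) : bundleValue u A i j = u i t := by
  rw [bundleValue, hj, Finset.sum_singleton]

lemma isAllocation_empty {N I : Type*} : IsAllocation (fun _ : N => (∅ : Finset I)) ∅ :=
  ⟨fun _ _ _ => Finset.disjoint_empty_left _, by simp⟩

lemma isMatching_empty {N I : Type*} (M : Finset I) :
    IsMatching (fun _ : N => (∅ : Finset I)) M :=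
  ⟨fun _ _ _ => Finset.disjoint_empty_left _, fun _ => Finset.empty_subset M, by simp⟩

lemma IsAllocation.subset {N I : Type*} {A : N → Finset I} {M : Finset I}
    (hA : IsAllocation A M) (j : N) : A j ⊆ M :=
  fun t ht => (hA.mem_iff t).2 ⟨j, ht⟩

section Allocation

variable {N I : Type*} [DecidableEq I] {A B : N → Finset I} {M M' : Finset I}

lemma IsAllocation.union (hA : IsAllocation A M) (hB : IsAllocation B M') (h : Disjoint M M') :
    IsAllocation (fun j => A j ∪ B j) (M ∪ M') where
  disjoint i j hij := by
    have hAB (i j : N) : Disjoint (A i) (B j) := h.mono (hA.subset i) (hB.subset j)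
    simp only [Function.onFun, Finset.disjoint_union_left, Finset.disjoint_union_right]
    exact ⟨⟨hA.disjoint hij, (hAB j i).symm⟩, hAB i j, hB.disjoint hij⟩
  mem_iff t := by simp only [Finset.mem_union, hA.mem_iff, hB.mem_iff, exists_or]

lemma IsAllocation.bundleValue_union (hA : IsAllocation A M) (hB : IsAllocation B M')
    (h : Disjoint M M') (u : N → I → ℝ) (i j : N) :
    bundleValue u (fun j => A j ∪ B j) i j = bundleValue u A i j + bundleValue u B i j :=
  Finset.sum_union (h.mono (hA.subset j) (hB.subset j))

end Allocation

namespace IsMatching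

variable {N I : Type*} {φ : N → Finset I} {M : Finset I}

lemma eq_empty_or_eq_singleton (hφ : IsMatching φ M) (i : N) :
    φ i = ∅ ∨ ∃ t ∈ M, φ i = {t} := by
  rcases Nat.le_one_iff_eq_zero_or_eq_one.1 (hφ.card_le_one i) with h | h
  · exact .inl (Finset.card_eq_zero.1 h)
  · obtain ⟨t, ht⟩ := Finset.card_eq_one.1 h
    exact .inr ⟨t, hφ.subset i (ht ▸ Finset.mem_singleton_self t), ht⟩

lemma eq_singleton_of_mem (hφ : IsMatching φ M) {i : N} {t : I} (ht : t ∈ φ i) : φ i = {t} :=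
  Finset.eq_singleton_iff_unique_mem.2
    ⟨ht, fun _ hs => Finset.card_le_one.1 (hφ.card_le_one i) _ hs _ ht⟩

lemma comp_perm (hφ : IsMatching φ M) (σ : Equiv.Perm N) : IsMatching (φ ∘ σ) M :=
  ⟨hφ.disjoint.comp_of_injective σ.injective, fun i => hφ.subset (σ i),
    fun i => hφ.card_le_one (σ i)⟩

variable [Fintype N] [DecidableEq I]

lemma update [DecidableEq N] (hφ : IsMatching φ M) {i : N} {C : Finset I}
    (hC : C ⊆ φ i ∪ (M \ Finset.univ.biUnion φ)) (hC_card : C.card ≤ 1) :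
    IsMatching (Function.update φ i C) M where
  disjoint := by
    have hdisj : ∀ j ≠ i, Disjoint C (φ j) := fun j hj =>
      Finset.disjoint_of_subset_left hC (Finset.disjoint_union_left.2
        ⟨hφ.disjoint hj.symm, Finset.sdiff_disjoint.mono_right
          (Finset.subset_biUnion_of_mem φ (Finset.mem_univ j))⟩)
    intro j k hjk
    rcases eq_or_ne j i with rfl | hj
    · simpa [Function.onFun, hjk.symm] using hdisj k hjk.symm
    rcases eq_or_ne k i with rfl | hk
    · simpa [Function.onFun, hj] using (hdisj j hj).symm
    · simpa [Function.onFun, hj, hk] using hφ.disjoint hjk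
  subset j := by
    rcases eq_or_ne j i with rfl | hj
    · simpa using hC.trans (Finset.union_subset (hφ.subset _) Finset.sdiff_subset)
    · simpa [hj] using hφ.subset j
  card_le_one j := by
    rcases eq_or_ne j i with rfl | hj
    · simpa using hC_card
    · simpa [hj] using hφ.card_le_one j

lemma update_singleton [DecidableEq N] (hφ : IsMatching φ M) (i : N) {t : I}
    (ht : t ∈ M \ Finset.univ.biUnion φ) : IsMatching (Function.update φ i {t}) M :=
  hφ.update (Finset.singleton_subset_iff.2 (Finset.mem_union_right _ ht)) (by simp)

lemma card_biUnion (hφ : IsMatching φ M) :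
    (Finset.univ.biUnion φ).card = ∑ i, (φ i).card :=
  Finset.card_biUnion fun _ _ _ _ hij => hφ.disjoint hij

lemma biUnion_subset (hφ : IsMatching φ M) : Finset.univ.biUnion φ ⊆ M :=
  Finset.biUnion_subset.2 fun i _ => hφ.subset i

lemma eq_empty_of_sdiff_biUnion_eq (hφ : IsMatching φ M) (h : M \ Finset.univ.biUnion φ = M)
    (i : N) : φ i = ∅ :=
  Finset.disjoint_self_iff_empty _ |>.1 <| (Finset.sdiff_eq_self_iff_disjoint.1 h).mono
    (hφ.subset i) (Finset.subset_biUnion_of_mem φ (Finset.mem_univ i))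

lemma isAllocation_biUnion (hφ : IsMatching φ M) : IsAllocation φ (Finset.univ.biUnion φ) :=
  ⟨hφ.disjoint, fun t => by simp⟩

lemma isAllocation_union (hφ : IsMatching φ M) {A : N → Finset I}
    (hA : IsAllocation A (M \ Finset.univ.biUnion φ)) :
    IsAllocation (fun j => φ j ∪ A j) M := by
  simpa only [Finset.union_sdiff_of_subset hφ.biUnion_subset] using
    hφ.isAllocation_biUnion.union hA Finset.disjoint_sdiff

lemma bundleValue_union (hφ : IsMatching φ M) {A : N → Finset I}
    (hA : IsAllocation A (M \ Finset.univ.biUnion φ)) (u : N → I → ℝ) (i j : N) :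
    bundleValue u (fun j => φ j ∪ A j) i j = bundleValue u φ i j + bundleValue u A i j :=
  hφ.isAllocation_biUnion.bundleValue_union hA Finset.disjoint_sdiff u i j

end IsMatching

lemma exists_isMatching_sum_card_eq {N I : Type*} [Fintype N] {M : Finset I} {ρ : ℕ}
    (hρN : ρ ≤ Fintype.card N) (hρM : ρ ≤ M.card) :
    ∃ φ : N → Finset I, IsMatching φ M ∧ ∑ i, (φ i).card = ρ := by
  classical
  induction ρ with
  | zero => exact ⟨_, isMatching_empty M, by simp⟩
  | succ ρ ih =>
    obtain ⟨φ, hφ, hφ_card⟩ := ih (by omega) (by omega)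
    obtain ⟨i, hi⟩ : ∃ i, φ i = ∅ := by
      by_contra! hne
      have := Finset.card_nsmul_le_sum Finset.univ (fun i => (φ i).card) 1
        fun i _ => (hne i).card_pos
      simp only [Finset.card_univ, smul_eq_mul, mul_one] at this
      omega
    obtain ⟨t, htM, ht⟩ := Finset.exists_mem_notMem_of_card_lt_card
      (show (Finset.univ.biUnion φ).card < M.card by rw [hφ.card_biUnion]; omega)
    refine ⟨_, hφ.update_singleton i (Finset.mem_sdiff.2 ⟨htM, ht⟩), ?_⟩
    have hsum := Finset.add_sum_erase Finset.univ (fun j => (φ j).card) (Finset.mem_univ i)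
    rw [← Finset.add_sum_erase _ _ (Finset.mem_univ i), Finset.sum_congr rfl fun j hj => by
      rw [Function.update_of_ne (Finset.ne_of_mem_erase hj)]]
    simp only [hi, Finset.card_empty, Function.update_self, Finset.card_singleton] at hsum ⊢
    omega

section Rounds

variable {N I : Type*} [Fintype N] {K G : Finset I} {ρ : ℕ} {P : N → Finset I × Finset I}

/-- A round in which agent `i` receives at most one chore, `(P i).1 ⊆ K`, and, if she receives a
chore, possibly also a good, `(P i).2 ⊆ G`. Exactly `ρ` chores are handed out. -/
structure IsRound (K G : Finset I) (ρ : ℕ) (P : N → Finset I × Finset I) : Prop where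
  chores : IsMatching (Prod.fst ∘ P) K
  goods : IsMatching (Prod.snd ∘ P) G
  card_goods_le (i : N) : (P i).2.card ≤ (P i).1.card
  sum_card_chores : ∑ i, (P i).1.card = ρ

lemma IsRound.comp_perm (hP : IsRound K G ρ P) (σ : Equiv.Perm N) : IsRound K G ρ (P ∘ σ) where
  chores := hP.chores.comp_perm σ
  goods := hP.goods.comp_perm σ
  card_goods_le i := hP.card_goods_le (σ i)
  sum_card_chores := (Equiv.sum_comp σ fun i => (P i).1.card).trans hP.sum_card_chores

lemma IsRound.update [DecidableEq N] [DecidableEq I] (hP : IsRound K G ρ P) {i : N} {C D : Finset I}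
    (hC : C ⊆ (P i).1 ∪ (K \ Finset.univ.biUnion (Prod.fst ∘ P)))
    (hD : D ⊆ (P i).2 ∪ (G \ Finset.univ.biUnion (Prod.snd ∘ P)))
    (hC_card : C.card = (P i).1.card) (hD_card : D.card ≤ (P i).1.card) :
    IsRound K G ρ (Function.update P i (C, D)) where
  chores := by
    rw [Function.comp_update]
    exact hP.chores.update hC (hC_card.trans_le (hP.chores.card_le_one i))
  goods := by
    rw [Function.comp_update]
    exact hP.goods.update hD (hD_card.trans (hP.chores.card_le_one i))
  card_goods_le j := by
    rcases eq_or_ne j i with rfl | hj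
    · simpa [hC_card] using hD_card
    · simpa [hj] using hP.card_goods_le j
  sum_card_chores := by
    rw [← hP.sum_card_chores]
    refine Finset.sum_congr rfl fun j _ => ?_
    rcases eq_or_ne j i with rfl | hj
    · simpa using hC_card
    · simp [hj]

/-- The matchings `φ` of chores and `γ` of goods form a round, and satisfy the exchange inequalities
of a round of maximum welfare. -/
structure IsOptimalRound [DecidableEq I] (u : N → I → ℝ) (K G : Finset I)
    (φ γ : N → Finset I) : Prop where
  chores : IsMatching φ K
  goods : IsMatching γ G
  goods_eq_empty {i : N} : φ i = ∅ → γ i = ∅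
  isEnvyFreeable : IsEnvyFreeable fun i j => bundleValue u φ i j + bundleValue u γ i j
  chore_le {i : N} {s c : I} : s ∈ φ i → c ∈ K \ Finset.univ.biUnion φ → u i c ≤ u i s
  goods_nonneg (i : N) : 0 ≤ bundleValue u γ i i
  good_le {i : N} {g : I} :
    (φ i).Nonempty → g ∈ G \ Finset.univ.biUnion γ → u i g ≤ bundleValue u γ i i

lemma exists_isOptimalRound [Finite I] [DecidableEq I] (u : N → I → ℝ) (K G : Finset I)
    (hρN : ρ ≤ Fintype.card N) (hρK : ρ ≤ K.card) :
    ∃ φ γ, IsOptimalRound u K G φ γ ∧ ∑ i, (φ i).card = ρ := by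
  classical
  obtain ⟨φ₀, hφ₀, hφ₀_card⟩ := exists_isMatching_sum_card_eq (N := N) hρN hρK
  obtain ⟨P, hP, hfree, hexch⟩ := exists_isEnvyFreeable_forall_update_le
    (fun i (b : Finset I × Finset I) => ∑ t ∈ b.1, u i t + ∑ t ∈ b.2, u i t)
    (P := {P | IsRound K G ρ P}) ⟨fun i => (φ₀ i, ∅), hφ₀, isMatching_empty G, by simp, hφ₀_card⟩
    fun P hP σ => hP.comp_perm σ
  refine ⟨Prod.fst ∘ P, Prod.snd ∘ P, ⟨hP.chores, hP.goods, fun {i} hi => ?_, hfree,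
    fun {i s c} hs hc => ?_, fun i => ?_, fun {i g} hi hg => ?_⟩, hP.sum_card_chores⟩
  · exact Finset.card_eq_zero.1 (Nat.le_zero.1 ((hP.card_goods_le i).trans_eq (by simpa using hi)))
  · have hs_eq : (P i).1 = {s} := hP.chores.eq_singleton_of_mem hs
    simpa [hs_eq] using hexch i ({c}, (P i).2) (hP.update
      (Finset.singleton_subset_iff.2 (Finset.mem_union_right _ hc)) Finset.subset_union_left
      (by simp [hs_eq]) (hP.card_goods_le i))
  · simpa [bundleValue] using hexch i ((P i).1, ∅) (hP.update
      Finset.subset_union_left (Finset.empty_subset _) rfl (by simp))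
  · simpa [bundleValue] using hexch i ((P i).1, {g}) (hP.update
      Finset.subset_union_left (Finset.singleton_subset_iff.2 (Finset.mem_union_right _ hg)) rfl
      hi.card_pos)

lemma exists_isMatching_dominating [Finite I] [DecidableEq I] (u : N → I → ℝ) (M : Finset I) :
    ∃ φ, IsMatching φ M ∧ IsEnvyFreeable (bundleValue u φ) ∧ (∀ i, 0 ≤ bundleValue u φ i i) ∧
      ∀ i, ∀ t ∈ M \ Finset.univ.biUnion φ, u i t ≤ bundleValue u φ i i := by
  classical
  obtain ⟨φ, hφ, hfree, hexch⟩ := exists_isEnvyFreeable_forall_update_le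
    (fun i (C : Finset I) => ∑ t ∈ C, u i t) (P := {φ | IsMatching φ M})
    ⟨_, isMatching_empty M⟩ fun φ hφ σ => hφ.comp_perm σ
  refine ⟨φ, hφ, hfree, fun i => ?_, fun i t ht => ?_⟩
  · simpa [bundleValue] using hexch i ∅ (hφ.update (Finset.empty_subset _) (by simp))
  · simpa [bundleValue] using hexch i {t} (hφ.update_singleton i ht)

/-- Envy-freeness up to one good: agent `i` envies agent `j` by at most her value for some item
of `j`. -/
def IsEnvyFreeUpToGood (u : N → I → ℝ) (A : N → Finset I) : Prop :=
  ∀ i j, bundleValue u A i j ≤ bundleValue u A i i ∨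
    ∃ t ∈ A j, bundleValue u A i j ≤ bundleValue u A i i + u i t

lemma exists_allocation_of_goods [Finite I] (u : N → I → ℝ) {M : Finset I}
    (hM : ∀ g ∈ M, ∃ i, 0 < u i g) :
    ∃ A, IsAllocation A M ∧ IsEnvyFreeable (bundleValue u A) ∧ IsEnvyFreeUpToGood u A := by
  classical
  induction M using Finset.strongInduction with
  | H M ih =>
  obtain ⟨φ, hφ, hφ_free, hφ_nonneg, hφ_dom⟩ := exists_isMatching_dominating u M
  rcases eq_or_ne (M \ Finset.univ.biUnion φ) M with hM_eq | hM_ne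
  · have hφ_empty (i : N) : bundleValue u φ i i = 0 := by
      simp [bundleValue, hφ.eq_empty_of_sdiff_biUnion_eq hM_eq]
    obtain rfl : M = ∅ := Finset.eq_empty_of_forall_notMem fun g hg => by
      obtain ⟨i, hi⟩ := hM g hg
      exact hi.not_ge (hφ_empty i ▸ hφ_dom i g (hM_eq.symm ▸ hg))
    exact ⟨_, isAllocation_empty, by simp [bundleValue, IsEnvyFreeable],
      by simp [bundleValue, IsEnvyFreeUpToGood]⟩
  obtain ⟨B, hB, hB_free, hB_ef1⟩ := ih _ (Finset.sdiff_subset.ssubset_of_ne hM_ne)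
    fun g hg => hM g (Finset.sdiff_subset hg)
  refine ⟨fun j => φ j ∪ B j, hφ.isAllocation_union hB, ?_, fun i j => ?_⟩
  · simpa only [IsEnvyFreeable, hφ.bundleValue_union hB] using hφ_free.add hB_free
  simp only [hφ.bundleValue_union hB]
  have hB_le : bundleValue u B i j ≤ bundleValue u φ i i + bundleValue u B i i := by
    rcases hB_ef1 i j with h | ⟨t, ht, h⟩
    · linarith [hφ_nonneg i]
    · linarith [hφ_dom i t (hB.subset j ht)]
  rcases hφ.eq_empty_or_eq_singleton j with hj | ⟨g, -, hj⟩
  · rw [bundleValue_of_eq_empty hj]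
    exact .inl (by linarith)
  · rw [bundleValue_of_eq_singleton hj]
    exact .inr ⟨g, by simp [hj], by linarith⟩

lemma exists_allocation_of_card_eq_mul [Finite I] (u : N → I → ℝ) {L : ℕ} {M : Finset I}
    (hM : M.card = L * Fintype.card N) :
    ∃ A, IsAllocation A M ∧ IsEnvyFreeable (bundleValue u A) ∧
      ∀ i j, M.Nonempty → ∃ t ∈ A i, ∃ t' ∈ M,
        bundleValue u A i j ≤ bundleValue u A i i + u i t' - u i t := by
  classical
  induction L generalizing M with
  | zero =>
    obtain rfl : M = ∅ := Finset.card_eq_zero.1 (by simpa using hM)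
    exact ⟨_, isAllocation_empty, by simp [bundleValue, IsEnvyFreeable], by simp⟩
  | succ L ih =>
  rw [Nat.succ_mul] at hM
  obtain ⟨φ, γ, hround, hφ_sum⟩ := exists_isOptimalRound u M ∅ le_rfl (hM ▸ Nat.le_add_left _ _)
  have hφ := hround.chores
  have hφ_mem (i : N) : ∃ s ∈ M, φ i = {s} := by
    refine (hφ.eq_empty_or_eq_singleton i).resolve_left fun hi => ?_
    have hlt : ∑ j, (φ j).card < ∑ _j : N, 1 :=
      Finset.sum_lt_sum (fun j _ => hφ.card_le_one j) ⟨i, Finset.mem_univ i, by simp [hi]⟩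
    simp [hφ_sum] at hlt
  have hφ_free : IsEnvyFreeable (bundleValue u φ) := by
    simpa [bundleValue, fun j => Finset.subset_empty.1 (hround.goods.subset j)]
      using! hround.isEnvyFreeable
  obtain ⟨B, hB, hB_free, hB_le⟩ := ih (M := M \ Finset.univ.biUnion φ) (by
    rw [Finset.card_sdiff_of_subset hφ.biUnion_subset, hφ.card_biUnion, hφ_sum, hM,
      Nat.add_sub_cancel])
  refine ⟨fun j => φ j ∪ B j, hφ.isAllocation_union hB, ?_, fun i j _ => ?_⟩
  · simpa only [IsEnvyFreeable, hφ.bundleValue_union hB] using hφ_free.add hB_free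
  simp only [hφ.bundleValue_union hB]
  obtain ⟨s, -, hs⟩ := hφ_mem i
  obtain ⟨s', hs'M, hs'⟩ := hφ_mem j
  rw [bundleValue_of_eq_singleton hs, bundleValue_of_eq_singleton hs']
  rcases (M \ Finset.univ.biUnion φ).eq_empty_or_nonempty with hempty | hnonempty
  · have hB_empty (k : N) : B k = ∅ := Finset.subset_empty.1 (hempty ▸ hB.subset k)
    rw [bundleValue_of_eq_empty (hB_empty i), bundleValue_of_eq_empty (hB_empty j)]
    exact ⟨s, by simp [hs], s', hs'M, by linarith⟩
  · obtain ⟨t, ht, t', ht', hle⟩ := hB_le i j hnonempty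
    have ht's := hround.chore_le (hs ▸ Finset.mem_singleton_self s) ht'
    exact ⟨t, by simp [ht], s', hs'M, by linarith⟩

/-- A strengthening of envy-freeness up to one item: agent `i` envies agent `j` by at most her
disvalue for a chore of her own, in `K`, or her value for a good of `j`, in `G`. -/
def IsEF1 (u : N → I → ℝ) (K G : Finset I) (A : N → Finset I) : Prop :=
  ∀ i j, bundleValue u A i j ≤ bundleValue u A i i ∨
    (∃ t ∈ A i, t ∈ K ∧ bundleValue u A i j ≤ bundleValue u A i i - u i t) ∨
    ∃ t ∈ A j, t ∈ G ∧ bundleValue u A i j ≤ bundleValue u A i i + u i t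

namespace IsOptimalRound

variable [DecidableEq I] {φ γ X Y : N → Finset I} {u : N → I → ℝ}

lemma isAllocation (h : IsOptimalRound u K G φ γ) (hKG : Disjoint K G)
    (hX : IsAllocation X (K \ Finset.univ.biUnion φ))
    (hY : IsAllocation Y (G \ Finset.univ.biUnion γ)) :
    IsAllocation (fun j => (φ j ∪ X j) ∪ (γ j ∪ Y j)) (K ∪ G) :=
  (h.chores.isAllocation_union hX).union (h.goods.isAllocation_union hY) hKG

lemma bundleValue_union (h : IsOptimalRound u K G φ γ) (hKG : Disjoint K G)
    (hX : IsAllocation X (K \ Finset.univ.biUnion φ))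
    (hY : IsAllocation Y (G \ Finset.univ.biUnion γ)) (i j : N) :
    bundleValue u (fun j => (φ j ∪ X j) ∪ (γ j ∪ Y j)) i j =
      (bundleValue u φ i j + bundleValue u γ i j) + bundleValue u X i j + bundleValue u Y i j := by
  rw [(h.chores.isAllocation_union hX).bundleValue_union (h.goods.isAllocation_union hY) hKG,
    h.chores.bundleValue_union hX, h.goods.bundleValue_union hY]
  ring

lemma bundleValue_add_nonpos (h : IsOptimalRound u K G φ γ)
    (hK : ∀ i, ∀ c ∈ K, u i c ≤ 0) (hGK : ∀ i, ∀ g ∈ G, ∀ c ∈ K, u i g + u i c ≤ 0) (i j : N) :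
    bundleValue u φ i j + bundleValue u γ i j ≤ 0 := by
  rcases h.chores.eq_empty_or_eq_singleton j with hφj | ⟨s, hs, hφj⟩
  · rw [bundleValue_of_eq_empty hφj, bundleValue_of_eq_empty (h.goods_eq_empty hφj), add_zero]
  rw [bundleValue_of_eq_singleton hφj]
  rcases h.goods.eq_empty_or_eq_singleton j with hγj | ⟨g, hg, hγj⟩
  · simpa [bundleValue_of_eq_empty hγj] using hK i s hs
  · rw [bundleValue_of_eq_singleton hγj, add_comm]
    exact hGK i g hg s hs

lemma bundleValue_le_of_nonempty (h : IsOptimalRound u K G φ γ)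
    (hY : IsAllocation Y (G \ Finset.univ.biUnion γ))
    (hY_ef1 : IsEnvyFreeUpToGood u Y) {i : N} (hi : (φ i).Nonempty) (j : N) :
    bundleValue u Y i j ≤ bundleValue u Y i i + bundleValue u γ i i := by
  rcases hY_ef1 i j with hle | ⟨g, hg, hle⟩
  · linarith [h.goods_nonneg i]
  · linarith [h.good_le hi (hY.subset j hg)]

lemma isEF1_of_nonempty (h : IsOptimalRound u K G φ γ) (hKG : Disjoint K G)
    (hK : ∀ i, ∀ c ∈ K, u i c ≤ 0) (hGK : ∀ i, ∀ g ∈ G, ∀ c ∈ K, u i g + u i c ≤ 0)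
    (hX : IsAllocation X (K \ Finset.univ.biUnion φ))
    (hX_le : ∀ i j, ∃ t ∈ X i, ∃ t' ∈ K \ Finset.univ.biUnion φ,
      bundleValue u X i j ≤ bundleValue u X i i + u i t' - u i t)
    (hY : IsAllocation Y (G \ Finset.univ.biUnion γ)) (hY_ef1 : IsEnvyFreeUpToGood u Y)
    (hY_le : ∀ i j, ∀ c ∈ K, bundleValue u Y i j ≤ bundleValue u Y i i - u i c) :
    IsEF1 u K G fun j => (φ j ∪ X j) ∪ (γ j ∪ Y j) := by
  intro i j
  simp only [h.bundleValue_union hKG hX hY]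
  obtain ⟨t, ht, t', ht', hle⟩ := hX_le i j
  refine .inr (.inl ⟨t, by simp [ht], Finset.sdiff_subset (hX.subset i ht), ?_⟩)
  have hround := h.bundleValue_add_nonpos hK hGK i j
  have hleftover : u i t' + bundleValue u Y i j ≤
      bundleValue u φ i i + bundleValue u γ i i + bundleValue u Y i i := by
    rcases h.chores.eq_empty_or_eq_singleton i with hφi | ⟨s, -, hφi⟩
    · rw [bundleValue_of_eq_empty hφi]
      linarith [hY_le i j t' (Finset.sdiff_subset ht'), h.goods_nonneg i]
    · have hs : s ∈ φ i := hφi ▸ Finset.mem_singleton_self s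
      rw [bundleValue_of_eq_singleton hφi]
      linarith [h.chore_le hs ht', h.bundleValue_le_of_nonempty hY hY_ef1 ⟨s, hs⟩ j]
  linarith

lemma isEF1_of_forall_eq_empty (h : IsOptimalRound u K G φ γ) (hKG : Disjoint K G)
    (hK : ∀ i, ∀ c ∈ K, u i c ≤ 0) (hGK : ∀ i, ∀ g ∈ G, ∀ c ∈ K, u i g + u i c ≤ 0)
    (hX : IsAllocation X (K \ Finset.univ.biUnion φ)) (hX_empty : ∀ i, X i = ∅)
    (hY : IsAllocation Y (G \ Finset.univ.biUnion γ)) (hY_ef1 : IsEnvyFreeUpToGood u Y)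
    (hY_le : ∀ i j, ∀ c ∈ K, bundleValue u Y i j ≤ bundleValue u Y i i - u i c) :
    IsEF1 u K G fun j => (φ j ∪ X j) ∪ (γ j ∪ Y j) := by
  intro i j
  simp only [h.bundleValue_union hKG hX hY, bundleValue_of_eq_empty (hX_empty _)]
  rcases h.chores.eq_empty_or_eq_singleton i with hφi | ⟨s, hs, hφi⟩
  · rw [bundleValue_of_eq_empty hφi, bundleValue_of_eq_empty (h.goods_eq_empty hφi)]
    rcases h.chores.eq_empty_or_eq_singleton j with hφj | ⟨s, hs, hφj⟩
    · rw [bundleValue_of_eq_empty hφj, bundleValue_of_eq_empty (h.goods_eq_empty hφj)]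
      rcases hY_ef1 i j with hle | ⟨g, hg, hle⟩
      · exact .inl (by linarith)
      · exact .inr (.inr ⟨g, by simp [hg], Finset.sdiff_subset (hY.subset j hg), by linarith⟩)
    rw [bundleValue_of_eq_singleton hφj]
    rcases h.goods.eq_empty_or_eq_singleton j with hγj | ⟨g, hg, hγj⟩
    · rw [bundleValue_of_eq_empty hγj]
      exact .inl (by linarith [hY_le i j s hs])
    · rw [bundleValue_of_eq_singleton hγj]
      exact .inr (.inr ⟨g, by simp [hγj], hg, by linarith [hY_le i j s hs]⟩)
  · have hround := h.bundleValue_add_nonpos hK hGK i j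
    have hgoods := h.bundleValue_le_of_nonempty hY hY_ef1 (hφi ▸ Finset.singleton_nonempty s) j
    rw [bundleValue_of_eq_singleton hφi]
    exact .inr (.inl ⟨s, by simp [hφi], hs, by linarith⟩)

end IsOptimalRound

lemma exists_allocation_isEF1_of_add_nonpos [Nonempty N] [Finite I] [DecidableEq I]
    (hKG : Disjoint K G) (u : N → I → ℝ) (hK : ∀ i, ∀ c ∈ K, u i c ≤ 0)
    (hG : ∀ g ∈ G, ∃ i, 0 < u i g) (hGK : ∀ i, ∀ g ∈ G, ∀ c ∈ K, u i g + u i c ≤ 0) :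
    ∃ A, IsAllocation A (K ∪ G) ∧ IsEnvyFreeable (bundleValue u A) ∧ IsEF1 u K G A := by
  obtain ⟨φ, γ, h, hφ_sum⟩ := exists_isOptimalRound u K G (ρ := K.card % Fintype.card N)
    (Nat.mod_lt _ Fintype.card_pos).le (Nat.mod_le _ _)
  obtain ⟨X, hX, hX_free, hX_le⟩ := exists_allocation_of_card_eq_mul u
    (L := K.card / Fintype.card N) (M := K \ Finset.univ.biUnion φ) (by
      rw [Finset.card_sdiff_of_subset h.chores.biUnion_subset, h.chores.card_biUnion, hφ_sum]
      have := Nat.mod_add_div' K.card (Fintype.card N)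
      omega)
  obtain ⟨Y, hY, hY_free, hY_ef1⟩ := exists_allocation_of_goods u
    fun g hg => hG g (Finset.sdiff_subset (t := Finset.univ.biUnion γ) hg)
  have hY_le (i j : N) (c : I) (hc : c ∈ K) :
      bundleValue u Y i j ≤ bundleValue u Y i i - u i c := by
    rcases hY_ef1 i j with hle | ⟨g, hg, hle⟩
    · linarith [hK i c hc]
    · linarith [hGK i g (Finset.sdiff_subset (hY.subset j hg)) c hc]
  refine ⟨fun j => (φ j ∪ X j) ∪ (γ j ∪ Y j), h.isAllocation hKG hX hY, ?_, ?_⟩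
  · simpa only [IsEnvyFreeable, h.bundleValue_union hKG hX hY] using
      (h.isEnvyFreeable.add hX_free).add hY_free
  rcases (K \ Finset.univ.biUnion φ).eq_empty_or_nonempty with hempty | hnonempty
  · exact h.isEF1_of_forall_eq_empty hKG hK hGK hX
      (fun i => Finset.subset_empty.1 (hempty ▸ hX.subset i)) hY hY_ef1 hY_le
  · exact h.isEF1_of_nonempty hKG hK hGK hX (fun i j => hX_le i j hnonempty) hY hY_ef1 hY_le

end Rounds

section Attach

variable {N I : Type*} [DecidableEq I] {A : N → Finset I} {M K G : Finset I} {g c : I}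

/-- The bundles `A`, with item `c` added to the bundle that contains item `g`. -/
def attachItem (A : N → Finset I) (g c : I) (j : N) : Finset I :=
  if g ∈ A j then insert c (A j) else A j

/-- The utilities once items `g` and `c` are glued together: `g` stands for both items. -/
def attachUtility (u : N → I → ℝ) (g c : I) (i : N) : I → ℝ :=
  Function.update (u i) g (u i g + u i c)

lemma attachUtility_self (u : N → I → ℝ) (g c : I) (i : N) :
    attachUtility u g c i g = u i g + u i c :=
  Function.update_self _ _ _

lemma attachUtility_of_ne (u : N → I → ℝ) (c : I) (i : N) {t : I} (ht : t ≠ g) :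
    attachUtility u g c i t = u i t :=
  Function.update_of_ne ht _ _

lemma mem_attachItem {j : N} {t : I} :
    t ∈ attachItem A g c j ↔ t ∈ A j ∨ t = c ∧ g ∈ A j := by
  by_cases hg : g ∈ A j <;> simp [attachItem, hg, or_comm]

lemma IsAllocation.attachItem (hA : IsAllocation A M) (hg : g ∈ M) (hc : c ∉ M) :
    IsAllocation (attachItem A g c) (insert c M) where
  disjoint i j hij := by
    have hc' (k : N) : c ∉ A k := fun h => hc (hA.subset k h)
    have hdisj := Finset.disjoint_left.1 (hA.disjoint hij)
    refine Finset.disjoint_left.2 fun t hti htj => ?_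
    rcases mem_attachItem.1 hti with hti | ⟨rfl, hgi⟩ <;>
      rcases mem_attachItem.1 htj with htj | ⟨heq, hgj⟩
    · exact hdisj hti htj
    · exact hc' i (heq ▸ hti)
    · exact hc' j htj
    · exact hdisj hgi hgj
  mem_iff t := by
    simp only [mem_attachItem, exists_or, exists_and_left, ← hA.mem_iff, Finset.mem_insert, hg,
      and_true, or_comm]

lemma bundleValue_attachItem (u : N → I → ℝ) (hc : ∀ j, c ∉ A j) (i j : N) :
    bundleValue u (attachItem A g c) i j = bundleValue (attachUtility u g c) A i j := by
  by_cases hg : g ∈ A j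
  · rw [bundleValue, bundleValue, attachItem, if_pos hg, Finset.sum_insert (hc j),
      ← Finset.add_sum_erase _ _ hg, ← Finset.add_sum_erase _ _ hg, attachUtility_self,
      Finset.sum_congr rfl fun t ht => attachUtility_of_ne u c i (Finset.ne_of_mem_erase ht)]
    ring
  · rw [bundleValue, bundleValue, attachItem, if_neg hg]
    exact Finset.sum_congr rfl fun t ht =>
      (attachUtility_of_ne u c i (ne_of_mem_of_not_mem ht hg)).symm

lemma IsEF1.attachItem {u : N → I → ℝ} (hKG : Disjoint K G) (hgG : g ∈ G)
    (hc : ∀ i, u i c ≤ 0) (hcA : ∀ j, c ∉ A j) (hA : IsEF1 (attachUtility u g c) (K.erase c) G A) :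
    IsEF1 u K G (attachItem A g c) := by
  intro i j
  simp only [bundleValue_attachItem u hcA]
  rcases hA i j with h | ⟨t, ht, htK, h⟩ | ⟨t, ht, htG, h⟩
  · exact .inl h
  · have htK' := Finset.mem_of_mem_erase htK
    have htg : t ≠ g := fun h => Finset.disjoint_left.1 hKG htK' (h ▸ hgG)
    rw [attachUtility_of_ne u c i htg] at h
    exact .inr (.inl ⟨t, mem_attachItem.2 (.inl ht), htK', h⟩)
  · refine .inr (.inr ⟨t, mem_attachItem.2 (.inl ht), htG, h.trans ?_⟩)
    rcases eq_or_ne t g with rfl | htg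
    · rw [attachUtility_self]
      linarith [hc i]
    · rw [attachUtility_of_ne u c i htg]

lemma exists_allocation_isEF1 [Fintype N] [Nonempty N] [Finite I] (hKG : Disjoint K G)
    (u : N → I → ℝ) (hK : ∀ i, ∀ c ∈ K, u i c ≤ 0) (hG : ∀ g ∈ G, ∃ i, 0 < u i g) :
    ∃ A, IsAllocation A (K ∪ G) ∧ IsEnvyFreeable (bundleValue u A) ∧ IsEF1 u K G A := by
  induction K using Finset.strongInduction generalizing u with
  | H K ih =>
  by_cases hGK : ∀ i, ∀ g ∈ G, ∀ c ∈ K, u i g + u i c ≤ 0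
  · exact exists_allocation_isEF1_of_add_nonpos hKG u hK hG hGK
  push Not at hGK
  obtain ⟨i₀, g, hg, c, hc, hpos⟩ := hGK
  have hgK (k : I) (hk : k ∈ K) : k ≠ g :=
    fun h => Finset.disjoint_left.1 hKG hk (h ▸ hg)
  obtain ⟨A, hA, hA_free, hA_ef1⟩ := ih (K.erase c) (Finset.erase_ssubset hc)
    (hKG.mono_left (Finset.erase_subset c K)) (attachUtility u g c)
    (fun i k hk => by
      have hk' := Finset.mem_of_mem_erase hk
      simpa only [attachUtility_of_ne u c i (hgK k hk')] using hK i k hk')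
    (fun g' hg' => by
      rcases eq_or_ne g' g with rfl | hne
      · exact ⟨i₀, by rwa [attachUtility_self]⟩
      · simpa only [attachUtility_of_ne u c _ hne] using hG g' hg')
  have hcM : c ∉ K.erase c ∪ G := by simp [Finset.disjoint_left.1 hKG hc]
  have hcA (j : N) : c ∉ A j := fun h => hcM (hA.subset j h)
  refine ⟨attachItem A g c, ?_, ?_, hA_ef1.attachItem hKG hg (fun i => hK i c hc) hcA⟩
  · simpa only [← Finset.insert_union, Finset.insert_erase hc] using
      hA.attachItem (Finset.mem_union_right _ hg) hcM
  · simpa only [IsEnvyFreeable, bundleValue_attachItem u hcA] using hA_free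

end Attach

lemma IsEF1.exists_sum_erase_le {N I : Type*} [DecidableEq I] {u : N → I → ℝ} {K G : Finset I}
    {A : N → Finset I} (hA : IsEF1 u K G A) (hA_disj : Pairwise (Disjoint on A)) (i j : N) :
    bundleValue u A i j ≤ bundleValue u A i i ∨
      ∃ t ∈ A i ∪ A j, ∑ s ∈ (A j).erase t, u i s ≤ ∑ s ∈ (A i).erase t, u i s := by
  rcases eq_or_ne i j with rfl | hij
  · exact .inl le_rfl
  have hdisj := Finset.disjoint_left.1 (hA_disj hij)
  rcases hA i j with h | ⟨t, ht, -, h⟩ | ⟨t, ht, -, h⟩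
  · exact .inl h
  · refine .inr ⟨t, Finset.mem_union_left _ ht, ?_⟩
    rwa [Finset.erase_eq_of_notMem (hdisj ht), Finset.sum_erase_eq_sub ht]
  · refine .inr ⟨t, Finset.mem_union_right _ ht, ?_⟩
    rw [Finset.erase_eq_of_notMem (hdisj · ht), Finset.sum_erase_eq_sub ht]
    exact sub_le_iff_le_add.2 h

/-- After dividing every agent's utilities by `w i`, the shares `x` are water-filled potentials of
the envy graph, and act as payments. -/
lemma exists_allocation_shares {N I : Type*} [Fintype N] [Nonempty N] [Fintype I] [DecidableEq I]
    (u : N → I → ℝ) {w : N → ℝ} (hw : ∀ i, 0 < w i) :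
    ∃ (A : N → Finset I) (x : N → ℝ), IsAllocation A Finset.univ ∧ (∀ j, 0 ≤ x j) ∧ ∑ j, x j = 1 ∧
      ∀ i j, (bundleValue u A i j ≤ bundleValue u A i i ∨
        ∃ t ∈ A i ∪ A j, ∑ s ∈ (A j).erase t, u i s ≤ ∑ s ∈ (A i).erase t, u i s) ∧
        (x j ≠ 0 → bundleValue u A i j + x j * w i ≤ bundleValue u A i i + x i * w i) := by
  classical
  let v (i : N) (t : I) : ℝ := u i t / w i
  have hv (i : N) (S : Finset I) : ∑ t ∈ S, v i t = (∑ t ∈ S, u i t) / w i :=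
    (Finset.sum_div S (u i) (w i)).symm
  obtain ⟨A, hA, hA_free, hA_ef1⟩ := exists_allocation_isEF1
    (Finset.disjoint_filter_filter_not Finset.univ Finset.univ fun t => ∀ i, v i t ≤ 0) v
    (fun i t ht => (Finset.mem_filter.1 ht).2 i) (fun t ht => by simpa using ht)
  obtain ⟨x, hx_nonneg, hx_sum, hx⟩ := hA_free.exists_shares zero_le_one
  refine ⟨A, x, by rwa [Finset.filter_union_filter_not_eq] at hA, hx_nonneg, hx_sum,
    fun i j => ⟨?_, fun hj => ?_⟩⟩
  · simpa only [bundleValue, hv, div_le_div_iff_of_pos_right (hw i)] using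
      hA_ef1.exists_sum_erase_le hA.disjoint i j
  · have hij := mul_le_mul_of_nonneg_right (hx i j hj) (hw i).le
    simpa only [bundleValue, hv, add_mul, div_mul_cancel₀ _ (hw i).ne'] using hij

lemma exists_allocation_shares_of_nonneg {N I : Type*} [Fintype N] [Nonempty N] [Fintype I]
    [DecidableEq I] (u : N → I → ℝ) {w : N → ℝ} (hw : ∀ i, 0 ≤ w i) :
    ∃ (A : N → Finset I) (x : N → ℝ), IsAllocation A Finset.univ ∧ (∀ j, 0 ≤ x j) ∧ ∑ j, x j = 1 ∧
      ∀ i j, bundleValue u A i j + x j * w i ≤ bundleValue u A i i + x i * w i ∨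
        x j * w i = 0 ∧
          ∃ t ∈ A i ∪ A j, ∑ s ∈ (A j).erase t, u i s ≤ ∑ s ∈ (A i).erase t, u i s := by
  obtain ⟨A, x, hA, hx, hx_sum, hefm⟩ := exists_allocation_shares u
    (w := fun i => if w i = 0 then 1 else w i) fun i => by
      split_ifs with hi
      exacts [one_pos, (hw i).lt_of_ne' hi]
  refine ⟨A, x, hA, hx, hx_sum, fun i j => ?_⟩
  obtain ⟨hef1, hshare⟩ := hefm i j
  by_cases hxw : x j * w i = 0
  · refine hef1.imp (fun hle => ?_) fun hremove => ⟨hxw, hremove⟩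
    rw [hxw, add_zero]
    exact hle.trans (le_add_of_nonneg_right (mul_nonneg (hx i) (hw i)))
  · exact .inl (by simpa [right_ne_zero_of_mul hxw] using hshare (left_ne_zero_of_mul hxw))

section DyadicChain

/-- The `2 ^ k + 1` members of the `k`-fold dyadic refinement of the pair `A, B` with respect to a
midpoint operation `mid`: level `k + 1` inserts `mid X Y` between consecutive members `X, Y` of
level `k`. The members of level `k` are those with index at most `2 ^ k`. Both halves of an even
index `2 * j` are `j`, so old members persist when `mid X X = X`. -/
def dyadicChain {β : Type*} (mid : β → β → β) (A B : β) : ℕ → ℕ → β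
  | 0, j => if j = 0 then A else B
  | k + 1, j => mid (dyadicChain mid A B k (j / 2)) (dyadicChain mid A B k ((j + 1) / 2))

lemma dyadicChain_succ_two_mul {β : Type*} {mid : β → β → β} (hmid : ∀ X, mid X X = X)
    (A B : β) (k j : ℕ) : dyadicChain mid A B (k + 1) (2 * j) = dyadicChain mid A B k j := by
  rw [dyadicChain, show 2 * j / 2 = j by omega, show (2 * j + 1) / 2 = j by omega, hmid]

lemma dyadicChain_zero_right {β : Type*} {mid : β → β → β} (hmid : ∀ X, mid X X = X)
    (A B : β) (k : ℕ) : dyadicChain mid A B k 0 = A := by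
  induction k with
  | zero => rfl
  | succ k ih => exact (dyadicChain_succ_two_mul hmid A B k 0).trans ih

lemma dyadicChain_two_pow {β : Type*} {mid : β → β → β} (hmid : ∀ X, mid X X = X)
    (A B : β) (k : ℕ) : dyadicChain mid A B k (2 ^ k) = B := by
  induction k with
  | zero => rfl
  | succ k ih => rw [pow_succ', dyadicChain_succ_two_mul hmid, ih]

variable {β : Type*} [PartialOrder β] {mid : β → β → β} {A B : β}

lemma monotone_dyadicChain (hmid : ∀ X Y, X ≤ Y → X ≤ mid X Y ∧ mid X Y ≤ Y) (hAB : A ≤ B)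
    (k : ℕ) : Monotone (dyadicChain mid A B k) := by
  induction k with
  | zero =>
    refine monotone_nat_of_le_succ fun j => ?_
    by_cases hj : j = 0 <;> simp [dyadicChain, hj, hAB]
  | succ k ih =>
    exact monotone_nat_of_le_succ fun j =>
      (hmid _ _ (ih (by omega))).2.trans (hmid _ _ (ih (by omega))).1

lemma monotone_dyadicChain_floor (hmid : ∀ X Y, X ≤ Y → X ≤ mid X Y ∧ mid X Y ≤ Y) (hAB : A ≤ B)
    (t : ℝ) : Monotone fun k => dyadicChain mid A B k ⌊t * 2 ^ k⌋₊ := by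
  have hmid_self (X : β) : mid X X = X := le_antisymm (hmid X X le_rfl).2 (hmid X X le_rfl).1
  refine monotone_nat_of_le_succ fun k => ?_
  rw [← dyadicChain_succ_two_mul hmid_self]
  refine monotone_dyadicChain hmid hAB (k + 1) ?_
  rcases le_or_gt 0 t with ht | ht
  · refine Nat.le_floor ?_
    have := Nat.floor_le (show 0 ≤ t * 2 ^ k by positivity)
    push_cast
    rw [pow_succ]
    linarith
  · rw [Nat.floor_of_nonpos (mul_nonpos_of_nonpos_of_nonneg ht.le (by positivity)), mul_zero]
    exact Nat.zero_le _

lemma apply_dyadicChain {m : β → ℝ} (hmid : ∀ X Y, X ≤ Y → X ≤ mid X Y ∧ mid X Y ≤ Y)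
    (hm : ∀ X Y, X ≤ Y → m (mid X Y) = (m X + m Y) / 2) (hAB : A ≤ B) {k j : ℕ} (hj : j ≤ 2 ^ k) :
    m (dyadicChain mid A B k j) = m A + j / 2 ^ k * (m B - m A) := by
  induction k generalizing j with
  | zero =>
    obtain rfl | rfl : j = 0 ∨ j = 1 := by rw [pow_zero] at hj; omega
    all_goals simp [dyadicChain]
  | succ k ih =>
    have hhalves : ((j / 2 : ℕ) : ℝ) + ((j + 1) / 2 : ℕ) = j := by
      exact_mod_cast show j / 2 + (j + 1) / 2 = j by omega
    rw [pow_succ] at hj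
    rw [dyadicChain, hm _ _ (monotone_dyadicChain hmid hAB k (by omega)), ih (by omega),
      ih (by omega), ← hhalves]
    field_simp
    ring

lemma tendsto_apply_dyadicChain_floor {m : β → ℝ}
    (hmid : ∀ X Y, X ≤ Y → X ≤ mid X Y ∧ mid X Y ≤ Y)
    (hm : ∀ X Y, X ≤ Y → m (mid X Y) = (m X + m Y) / 2) (hAB : A ≤ B) {t : ℝ}
    (ht : t ∈ Set.Icc (0 : ℝ) 1) :
    Tendsto (fun k => m (dyadicChain mid A B k ⌊t * 2 ^ k⌋₊)) atTop
      (𝓝 (m A + t * (m B - m A))) := by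
  have hindex (k : ℕ) : ⌊t * 2 ^ k⌋₊ ≤ 2 ^ k :=
    Nat.floor_le_of_le (by push_cast; exact mul_le_of_le_one_left (by positivity) ht.2)
  simp only [apply_dyadicChain hmid hm hAB (hindex _)]
  exact (((tendsto_nat_floor_mul_div_atTop ht.1).comp
    (tendsto_pow_atTop_atTop_of_one_lt one_lt_two)).mul_const _).const_add _

end DyadicChain

lemma exists_measureReal_Ioc_eq {μ : Measure ℝ} [IsFiniteMeasure μ] [NullSingletonClass μ]
    {a b r : ℝ} (hab : a ≤ b) (hr : r ∈ Set.Icc 0 (μ.real (Set.Ioc a b))) :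
    ∃ x, μ.real (Set.Ioc a x) = r := by
  have hprim {x : ℝ} (hx : a ≤ x) : ∫ _ in a..x, (1 : ℝ) ∂μ = μ.real (Set.Ioc a x) := by
    rw [intervalIntegral.integral_of_le hx]
    simp
  have hcont : Continuous fun x => ∫ _ in a..x, (1 : ℝ) ∂μ :=
    intervalIntegral.continuous_primitive (fun _ _ => intervalIntegrable_const) a
  obtain ⟨x, hx, hxr⟩ := intermediate_value_Icc hab hcont.continuousOn
    (show r ∈ _ by simpa only [hprim hab, intervalIntegral.integral_same] using hr)
  exact ⟨x, (hprim hx.1).symm.trans hxr⟩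

section CakeDivision

variable {α : Type*} [MeasurableSpace α]

/-- Any two nested measurable sets have a measurable set between them whose measure is the average
of theirs, simultaneously for all measures of the family `𝓜`. -/
def HasMidpoints (𝓜 : Set (Measure α)) : Prop :=
  ∀ A B, MeasurableSet A → MeasurableSet B → A ⊆ B →
    ∃ F, MeasurableSet F ∧ A ⊆ F ∧ F ⊆ B ∧ ∀ μ ∈ 𝓜, μ.real F = (μ.real A + μ.real B) / 2

/-- An increasing family of measurable sets from `A` at time `0` to `B` at time `1` whose measure
grows linearly in time, for every measure of the family `𝓜`. -/
structure IsInterpolation (𝓜 : Set (Measure α)) (A B : Set α) (S : ℝ → Set α) : Prop where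
  monotone : Monotone S
  measurableSet (t : ℝ) : MeasurableSet (S t)
  apply_zero : S 0 = A
  apply_one : S 1 = B
  measureReal_apply : ∀ μ ∈ 𝓜, ∀ t ∈ Set.Icc (0 : ℝ) 1,
    μ.real (S t) = μ.real A + t * (μ.real B - μ.real A)

variable {𝓜 : Set (Measure α)} {A B : Set α} {S : ℝ → Set α} {μ ν : Measure α}

lemma HasMidpoints.exists_isInterpolation (h𝓜 : HasMidpoints 𝓜)
    (hfin : ∀ μ ∈ 𝓜, IsFiniteMeasure μ) (hA : MeasurableSet A) (hB : MeasurableSet B)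
    (hAB : A ⊆ B) : ∃ S, IsInterpolation 𝓜 A B S := by
  let β := {X : Set α // MeasurableSet X}
  have hmid (X Y : β) (hXY : X ≤ Y) :
      ∃ F : β, (X ≤ F ∧ F ≤ Y) ∧ ∀ μ ∈ 𝓜, μ.real F.1 = (μ.real X.1 + μ.real Y.1) / 2 := by
    obtain ⟨F, hF, hXF, hFY, hμF⟩ := h𝓜 X.1 Y.1 X.2 Y.2 hXY
    exact ⟨⟨F, hF⟩, ⟨hXF, hFY⟩, hμF⟩
  choose! mid hmid hμmid using hmid
  have hmid_self (X : β) : mid X X = X := le_antisymm (hmid X X le_rfl).2 (hmid X X le_rfl).1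
  let A' : β := ⟨A, hA⟩
  let B' : β := ⟨B, hB⟩
  have hAB' : A' ≤ B' := hAB
  let approx (t : ℝ) (k : ℕ) : β := dyadicChain mid A' B' k ⌊t * 2 ^ k⌋₊
  refine ⟨fun t => ⋃ k, (approx t k).1, fun s t hst => ?_,
    fun t => MeasurableSet.iUnion fun k => (approx t k).2, ?_, ?_, fun μ hμ t ht => ?_⟩
  · exact Set.iUnion_mono fun k =>
      monotone_dyadicChain hmid hAB' k (Nat.floor_mono (by gcongr))
  · simp [approx, dyadicChain_zero_right hmid_self, A', Set.iUnion_const]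
  · have hfloor (k : ℕ) : ⌊(1 : ℝ) * 2 ^ k⌋₊ = 2 ^ k := by
      rw [one_mul]
      exact_mod_cast Nat.floor_natCast (R := ℝ) (2 ^ k)
    simp [approx, hfloor, dyadicChain_two_pow hmid_self, B', Set.iUnion_const, -one_mul]
  · have := hfin μ hμ
    have happrox_mono : Monotone fun k => (approx t k).1 :=
      monotone_dyadicChain_floor hmid hAB' t
    exact tendsto_nhds_unique
      ((ENNReal.tendsto_toReal (measure_ne_top μ _)).comp
        (tendsto_measure_iUnion_atTop happrox_mono))
      (tendsto_apply_dyadicChain_floor (m := fun X : β => μ.real X.1) hmid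
        (fun X Y hXY => hμmid X Y hXY μ hμ) hAB' ht)

lemma IsInterpolation.continuousOn_measureReal [IsFiniteMeasure ν] (hS : IsInterpolation 𝓜 A B S)
    (hν : ν ∈ 𝓜) (hμν : μ ≤ ν) : ContinuousOn (fun t => μ.real (S t)) (Set.Icc 0 1) := by
  have : IsFiniteMeasure μ := isFiniteMeasure_of_le ν hμν
  have hAB_ν : 0 ≤ ν.real B - ν.real A := by
    rw [← hS.apply_zero, ← hS.apply_one]
    exact sub_nonneg.2 (measureReal_mono (hS.monotone zero_le_one))
  have hincrement {s t : ℝ} (hs : s ∈ Set.Icc (0 : ℝ) 1) (ht : t ∈ Set.Icc (0 : ℝ) 1)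
      (hst : s ≤ t) : μ.real (S t) - μ.real (S s) ≤ (t - s) * (ν.real B - ν.real A) := by
    calc μ.real (S t) - μ.real (S s) = μ.real (S t \ S s) :=
          (measureReal_sdiff (hS.monotone hst) (hS.measurableSet s)).symm
      _ ≤ ν.real (S t \ S s) := ENNReal.toReal_mono (by finiteness) (hμν _)
      _ = (t - s) * (ν.real B - ν.real A) := by
          rw [measureReal_sdiff (hS.monotone hst) (hS.measurableSet s),
            hS.measureReal_apply ν hν s hs, hS.measureReal_apply ν hν t ht]
          ring
  refine (LipschitzOnWith.of_le_add_mul' (ν.real B - ν.real A) fun t ht s hs => ?_).continuousOn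
  rcases le_total s t with hst | hts
  · rw [Real.dist_eq, abs_of_nonneg (sub_nonneg.2 hst)]
    linarith [hincrement hs ht hst]
  · exact (measureReal_mono (hS.monotone hts)).trans
      (le_add_of_nonneg_right (mul_nonneg hAB_ν dist_nonneg))

lemma IsInterpolation.exists_measureReal_window_eq [IsFiniteMeasure ν]
    (hS : IsInterpolation 𝓜 A B S) (hν : ν ∈ 𝓜) (hμν : μ ≤ ν) :
    ∃ t ∈ Set.Icc (0 : ℝ) (1 / 2),
      μ.real (S (t + 1 / 2)) - μ.real (S t) = (μ.real B - μ.real A) / 2 := by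
  let window (t : ℝ) : ℝ := μ.real (S (t + 1 / 2)) - μ.real (S t)
  have hcont : ContinuousOn window (Set.Icc 0 (1 / 2)) := by
    have hμS := hS.continuousOn_measureReal hν hμν
    refine (hμS.comp (by fun_prop) fun t ht => ?_).sub (hμS.mono fun t ht => ?_)
    all_goals constructor <;> linarith [ht.1, ht.2]
  have hsum : window 0 + window (1 / 2) = μ.real B - μ.real A := by
    simp only [window]
    norm_num [hS.apply_zero, hS.apply_one]
  rw [← Set.uIcc_of_le (show (0 : ℝ) ≤ 1 / 2 by norm_num)] at hcont ⊢
  refine intermediate_value_uIcc hcont (Set.mem_uIcc.2 ?_)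
  rcases le_total (window 0) (window (1 / 2)) with h | h
  · left; constructor <;> linarith
  · right; constructor <;> linarith

lemma IsInterpolation.exists_disjoint_pieces (hS : IsInterpolation 𝓜 ∅ B S)
    (hfin : ∀ μ ∈ 𝓜, IsFiniteMeasure μ) {N : Type*} {x : N → ℝ} (hx : ∀ i, 0 ≤ x i)
    (s : Finset N) (hs : ∑ i ∈ s, x i ≤ 1) :
    ∃ C : N → Set α, (∀ i, MeasurableSet (C i)) ∧ (s : Set N).PairwiseDisjoint C ∧
      ⋃ i ∈ s, C i = S (∑ i ∈ s, x i) ∧ ∀ μ ∈ 𝓜, ∀ i ∈ s, μ.real (C i) = x i * μ.real B := by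
  classical
  induction s using Finset.induction_on with
  | empty => exact ⟨fun _ => ∅, by simp [hS.apply_zero]⟩
  | insert a s ha ih =>
    rw [Finset.sum_insert ha] at hs ⊢
    set σ := ∑ i ∈ s, x i
    have hσ : 0 ≤ σ := Finset.sum_nonneg fun i _ => hx i
    obtain ⟨C, hC_meas, hC_disj, hC_union, hC⟩ := ih (by linarith [hx a])
    have hσ_sub : S σ ⊆ S (x a + σ) := hS.monotone (by linarith [hx a])
    let C' := Function.update C a (S (x a + σ) \ S σ)
    have hC'_a : C' a = S (x a + σ) \ S σ := Function.update_self ..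
    have hC'_s : ∀ i ∈ s, C' i = C i := fun i hi =>
      Function.update_of_ne (ne_of_mem_of_not_mem hi ha) ..
    refine ⟨C', fun i => ?_, ?_, ?_, fun μ hμ i hi => ?_⟩
    · rcases eq_or_ne i a with rfl | hi
      · exact hC'_a ▸ (hS.measurableSet _).diff (hS.measurableSet _)
      · simpa only [C', Function.update_of_ne hi] using hC_meas i
    · rw [Finset.coe_insert, Set.pairwiseDisjoint_insert_of_notMem ha]
      refine ⟨fun i hi j hj hij => ?_, fun i hi => ?_⟩
      · simpa only [Function.onFun, hC'_s i hi, hC'_s j hj] using hC_disj hi hj hij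
      · rw [hC'_a, hC'_s i hi]
        exact Set.disjoint_sdiff_left.mono_right (hC_union ▸ Set.subset_biUnion_of_mem hi)
    · rw [Finset.set_biUnion_insert, hC'_a, Set.iUnion₂_congr hC'_s, hC_union,
        Set.sdiff_union_of_subset hσ_sub]
    · rcases Finset.mem_insert.1 hi with rfl | hi
      · have := hfin μ hμ
        rw [hC'_a, measureReal_sdiff hσ_sub (hS.measurableSet σ),
          hS.measureReal_apply μ hμ σ ⟨hσ, by linarith [hx i]⟩,
          hS.measureReal_apply μ hμ _ ⟨by linarith [hx i], hs⟩, measureReal_empty]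
        ring
      · rw [hC'_s i hi, hC μ hμ i hi]

lemma HasMidpoints.exists_partition (h𝓜 : HasMidpoints 𝓜) (hfin : ∀ μ ∈ 𝓜, IsFiniteMeasure μ)
    (hB : MeasurableSet B) {N : Type*} [Fintype N] {x : N → ℝ} (hx : ∀ i, 0 ≤ x i)
    (hx_sum : ∑ i, x i = 1) :
    ∃ C : N → Set α, (∀ i, MeasurableSet (C i)) ∧ Pairwise (Disjoint on C) ∧
      ⋃ i, C i = B ∧ ∀ μ ∈ 𝓜, ∀ i, μ.real (C i) = x i * μ.real B := by
  obtain ⟨S, hS⟩ := h𝓜.exists_isInterpolation hfin .empty hB (Set.empty_subset B)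
  obtain ⟨C, hC_meas, hC_disj, hC_union, hC⟩ :=
    hS.exists_disjoint_pieces hfin hx Finset.univ hx_sum.le
  refine ⟨C, hC_meas, fun i j hij => hC_disj (by simp) (by simp) hij, ?_,
    fun μ hμ i => hC μ hμ i (Finset.mem_univ i)⟩
  simpa [hx_sum, hS.apply_one] using hC_union

lemma HasMidpoints.insert (h𝓜 : HasMidpoints 𝓜) (hfin : ∀ μ ∈ 𝓜, IsFiniteMeasure μ)
    (hν : ν ∈ 𝓜) (hμν : μ ≤ ν) : HasMidpoints (insert μ 𝓜) := by
  intro A B hA hB hAB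
  obtain ⟨S, hS⟩ := h𝓜.exists_isInterpolation hfin hA hB hAB
  have := hfin ν hν
  have : IsFiniteMeasure μ := isFiniteMeasure_of_le ν hμν
  obtain ⟨t, ht, hwindow⟩ := hS.exists_measureReal_window_eq hν hμν
  have hA_sub : A ⊆ S t := hS.apply_zero ▸ hS.monotone ht.1
  have hsub_B : S (t + 1 / 2) ⊆ B := hS.apply_one ▸ hS.monotone (by linarith [ht.2])
  have hmeas : MeasurableSet (S (t + 1 / 2) \ S t) := (hS.measurableSet _).diff (hS.measurableSet t)
  have hreal (μ' : Measure α) [IsFiniteMeasure μ'] :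
      μ'.real (A ∪ S (t + 1 / 2) \ S t)
        = μ'.real A + (μ'.real (S (t + 1 / 2)) - μ'.real (S t)) := by
    rw [measureReal_union (Set.disjoint_sdiff_right.mono_left hA_sub) hmeas,
      measureReal_sdiff (hS.monotone (by linarith)) (hS.measurableSet t)]
  refine ⟨A ∪ S (t + 1 / 2) \ S t, hA.union hmeas, Set.subset_union_left,
    Set.union_subset hAB (Set.sdiff_subset.trans hsub_B), ?_⟩
  rintro μ' (rfl | hμ')
  · rw [hreal, hwindow]
    ring
  · have := hfin μ' hμ'
    rw [hreal, hS.measureReal_apply μ' hμ' t ⟨ht.1, by linarith [ht.2]⟩,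
      hS.measureReal_apply μ' hμ' (t + 1 / 2) ⟨by linarith [ht.1], by linarith [ht.2]⟩]
    ring

section StandardBorel

variable [StandardBorelSpace α]

/-- A case of Sierpiński's theorem; the space embeds measurably into `(0, 1)`. -/
lemma exists_measurableSet_measureReal_eq (μ : Measure α) [IsFiniteMeasure μ]
    [NullSingletonClass μ] {r : ℝ} (hr : r ∈ Set.Icc 0 (μ.real Set.univ)) :
    ∃ F, MeasurableSet F ∧ μ.real F = r := by
  let e : α → ℝ := Real.sigmoid ∘ embeddingReal α
  have he : MeasurableEmbedding e :=
    (MeasurableEmbedding.subtype_coe measurableSet_Icc).comp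
      (measurableEmbedding_sigmoid_comp_embeddingReal α)
  have : NullSingletonClass (μ.map e) := ⟨fun x => by
    rw [he.map_apply]
    exact (Set.subsingleton_singleton.preimage he.injective).measure_zero μ⟩
  have htotal : (μ.map e).real (Set.Ioc 0 1) = μ.real Set.univ := by
    rw [map_measureReal_apply he.measurable measurableSet_Ioc,
      Set.preimage_eq_univ_iff.2]
    rintro _ ⟨x, rfl⟩
    exact ⟨Real.sigmoid_pos _, Real.sigmoid_le_one _⟩
  obtain ⟨x, hx⟩ := exists_measureReal_Ioc_eq zero_le_one (htotal ▸ hr)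
  exact ⟨e ⁻¹' Set.Ioc 0 x, he.measurable measurableSet_Ioc,
    by rw [← hx, map_measureReal_apply he.measurable measurableSet_Ioc]⟩

lemma hasMidpoints_singleton (μ : Measure α) [IsFiniteMeasure μ] [NullSingletonClass μ] :
    HasMidpoints {μ} := by
  intro A B hA hB hAB
  obtain ⟨F, hF, hμF⟩ := exists_measurableSet_measureReal_eq (μ.restrict (B \ A))
    (r := μ.real (B \ A) / 2) (by
      rw [measureReal_restrict_apply_univ]
      constructor <;> linarith [measureReal_nonneg (μ := μ) (s := B \ A)])
  rw [measureReal_restrict_apply hF, measureReal_sdiff hAB hA] at hμF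
  have hmeas : MeasurableSet (F ∩ (B \ A)) := hF.inter (hB.diff hA)
  refine ⟨A ∪ F ∩ (B \ A), hA.union hmeas, Set.subset_union_left,
    Set.union_subset hAB (Set.inter_subset_right.trans Set.sdiff_subset), ?_⟩
  rintro μ rfl
  rw [measureReal_union (Set.disjoint_sdiff_right.mono_right Set.inter_subset_right) hmeas, hμF]
  ring

lemma hasMidpoints_range {ι : Type*} [Finite ι] (μ : ι → Measure α) [∀ i, IsFiniteMeasure (μ i)]
    [∀ i, NullSingletonClass (μ i)] : HasMidpoints (Set.range μ) := by
  have := Fintype.ofFinite ι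
  have : NullSingletonClass (Measure.sum μ) := ⟨fun x => by simp⟩
  suffices HasMidpoints (insert (Measure.sum μ) (Set.range μ)) from
    fun A B hA hB hAB =>
      (this A B hA hB hAB).imp fun F ⟨hF, hAF, hFB, hμF⟩ =>
        ⟨hF, hAF, hFB, fun μ hμ => hμF μ (Set.mem_insert_of_mem _ hμ)⟩
  refine Set.Finite.induction_on_subset (Set.range μ) (Set.finite_range μ) ?_ ?_
  · rw [LawfulSingleton.insert_empty_eq]
    exact hasMidpoints_singleton _
  · rintro _ T ⟨i, rfl⟩ hT _ ih
    rw [Set.insert_comm]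
    refine ih.insert ?_ (Set.mem_insert _ _) (Measure.le_sum μ i)
    rintro _ (rfl | hν)
    · infer_instance
    · obtain ⟨j, rfl⟩ := hT hν
      infer_instance

lemma exists_partition_setIntegral_eq {ν : Measure α} [NullSingletonClass ν] {E : Set α}
    (hE : MeasurableSet E) {ι : Type*} [Finite ι] {f : ι → α → ℝ}
    (hf_nonneg : ∀ i, 0 ≤ᵐ[ν.restrict E] f i) (hf_int : ∀ i, IntegrableOn (f i) E ν)
    {N : Type*} [Fintype N] {x : N → ℝ} (hx : ∀ j, 0 ≤ x j) (hx_sum : ∑ j, x j = 1) :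
    ∃ C : N → Set α, (∀ j, MeasurableSet (C j)) ∧ Pairwise (Disjoint on C) ∧
      ⋃ j, C j = E ∧ ∀ i j, ∫ t in C j, f i t ∂ν = x j * ∫ t in E, f i t ∂ν := by
  let μ (i : ι) : Measure α := (ν.restrict E).withDensity fun t => ENNReal.ofReal (f i t)
  have hμ_fin (i : ι) : IsFiniteMeasure (μ i) := isFiniteMeasure_withDensity_ofReal (hf_int i).2
  have hμ_real (i : ι) {X : Set α} (hX : MeasurableSet X) (hXE : X ⊆ E) :
      (μ i).real X = ∫ t in X, f i t ∂ν := by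
    have hrestrict : (ν.restrict E).restrict X = ν.restrict X := by
      rw [Measure.restrict_restrict hX, Set.inter_eq_self_of_subset_left hXE]
    rw [Measure.real, withDensity_apply _ hX, hrestrict, integral_eq_lintegral_of_nonneg_ae
      (ae_restrict_of_ae_restrict_of_subset hXE (hf_nonneg i)) ((hf_int i).mono_set hXE).1]
  obtain ⟨C, hC_meas, hC_disj, hC_union, hC⟩ := (hasMidpoints_range μ).exists_partition
    (by rintro _ ⟨i, rfl⟩; exact hμ_fin i) hE hx hx_sum
  refine ⟨C, hC_meas, hC_disj, hC_union, fun i j => ?_⟩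
  rw [← hμ_real i (hC_meas j) (hC_union ▸ Set.subset_iUnion C j), hC _ ⟨i, rfl⟩,
    hμ_real i hE subset_rfl]

end StandardBorel

end CakeDivision

end EFM

theorem efm_exists_mixed_items_and_cake_general {N I α : Type*} [Fintype N] [Nonempty N]
    [Fintype I] [DecidableEq I] [MeasurableSpace α] [StandardBorelSpace α] {ν : Measure α}
    [NullSingletonClass ν] {E : Set α} (hE : MeasurableSet E) (u : N → I → ℝ) (f : N → α → ℝ)
    (hf_nonneg : ∀ i, 0 ≤ᵐ[ν.restrict E] f i) (hf_int : ∀ i, IntegrableOn (f i) E ν) :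
    ∃ (A : N → Finset I) (C : N → Set α),
      (∀ i j, i ≠ j → Disjoint (A i) (A j)) ∧
      (Finset.univ.biUnion A = Finset.univ) ∧
      (∀ i, MeasurableSet (C i)) ∧
      (∀ i j, i ≠ j → Disjoint (C i) (C j)) ∧
      (⋃ i, C i) = E ∧
      ∀ i j : N,
        (∑ t ∈ A i, u i t) + (∫ x in C i, f i x ∂ν) ≥
            (∑ t ∈ A j, u i t) + (∫ x in C j, f i x ∂ν) ∨
          ((∫ x in C j, f i x ∂ν) = 0 ∧
            ∃ t ∈ A i ∪ A j, (∑ s ∈ (A i).erase t, u i s) ≥ ∑ s ∈ (A j).erase t, u i s) := by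
  obtain ⟨A, x, hA, hx, hx_sum, hefm⟩ := EFM.exists_allocation_shares_of_nonneg u
    fun i => integral_nonneg_of_ae (hf_nonneg i)
  obtain ⟨C, hC_meas, hC_disj, hC_union, hC⟩ :=
    EFM.exists_partition_setIntegral_eq hE hf_nonneg hf_int hx hx_sum
  refine ⟨A, C, fun _ _ h => hA.disjoint h, ?_, hC_meas, fun _ _ h => hC_disj h, hC_union,
    fun i j => ?_⟩
  · ext t
    simpa using (hA.mem_iff t).1 (Finset.mem_univ t)
  · simpa only [hC, EFM.bundleValue, ge_iff_le] using hefm i j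

/-- With any number of agents having additive utilities over a finite set of
indivisible items (goods and/or chores) and cake utilities given by nonnegative integrable
densities on `[0,1]`, an EFM allocation always exists. -/
theorem efm_exists_mixed_items_and_cake
    (n : ℕ) (hn : 0 < n) (I : Type) [Fintype I] [DecidableEq I]
    (u : Fin n → I → ℝ)
    (f : Fin n → ℝ → ℝ)
    (hf_nonneg : ∀ i x, 0 ≤ f i x)
    (hf_int : ∀ i, IntegrableOn (f i) (Set.Icc (0 : ℝ) 1)) :
    ∃ (A : Fin n → Finset I) (C : Fin n → Set ℝ),
      -- (A_1, …, A_n) is a partition of the items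
      (∀ i j, i ≠ j → Disjoint (A i) (A j)) ∧
      (Finset.univ.biUnion A = Finset.univ) ∧
      -- (C_1, …, C_n) is a measurable partition of the cake [0,1]
      (∀ i, MeasurableSet (C i)) ∧
      (∀ i j, i ≠ j → Disjoint (C i) (C j)) ∧
      ((⋃ i, C i) = Set.Icc (0 : ℝ) 1) ∧
      -- EFM
      (∀ i j : Fin n,
        (∑ t ∈ A i, u i t) + (∫ x in C i, f i x) ≥
            (∑ t ∈ A j, u i t) + (∫ x in C j, f i x) ∨
          ((∫ x in C j, f i x) = 0 ∧
            ∃ t ∈ A i ∪ A j,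
              (∑ s ∈ (A i).erase t, u i s) ≥ ∑ s ∈ (A j).erase t, u i s)) := by
  have : Nonempty (Fin n) := ⟨⟨0, hn⟩⟩
  exact efm_exists_mixed_items_and_cake_general measurableSet_Icc u f
    (fun i => .of_forall (hf_nonneg i)) hf_int
end

section
/- For any number n of agents with additive utilities over a finite set M of indivisible items (where each item may be a good for some agents and a chore for others), there exists an allocation of M that is simultaneously EF1 and envy-freeable. -/
/-!
Call an allocation permutation-optimal if no reassignment of its bundles to the agents raises the
total utility. Letting `p i` be the largest weight of a simple path starting at agent `i` in the
complete digraph whose edge `(i, j)` weighs the envy of `i` towards `j` then gives payments that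
remove all envy (Halpern and Shah). Permutation-optimality survives bundlewise unions of disjoint
allocations, so an allocation may be built in rounds of maximum welfare, and it remains to control
EF1 along the way.

Call an item a chore if no agent values it positively, and suppose first that every set of goods
together with a chore is worth at most zero to everyone. Hand out one chore each to `#C % n` agents,
any goods they like coming along for free; distribute the remaining goods in rounds of at most one
item per agent; finally distribute the remaining chores, now a multiple of `n`, in rounds of
exactly one item per agent.

In the other case, glue a chore to a minimal set of goods that compensates some agent for it,
allocate the resulting smaller instance and unglue. By minimality, each agent values the glued item
at most as much as any single good in it, so EF1 is preserved.
-/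

open Finset Function

variable {ι α G : Type*}

section PermOptimal

/-- A weight matrix (`w i j` being the value to agent `i` of the bundle of agent `j`) is
permutation-optimal if the identity is an optimal assignment of bundles to agents. -/
def IsPermOptimal [Fintype ι] [AddCommMonoid G] [LE G] (w : ι → ι → G) : Prop :=
  ∀ σ : Equiv.Perm ι, ∑ i, w i (σ i) ≤ ∑ i, w i i

lemma IsPermOptimal.add [Fintype ι] [AddCommMonoid G] [Preorder G] [IsOrderedAddMonoid G]
    {w w' : ι → ι → G} (h : IsPermOptimal w) (h' : IsPermOptimal w') : IsPermOptimal (w + w') :=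
  fun σ ↦ by simpa [sum_add_distrib] using add_le_add (h σ) (h' σ)

lemma exists_isPermOptimal_forall_update_le {β : Type*} [Fintype ι] [DecidableEq ι]
    [AddCommMonoid G] [LinearOrder G] [IsOrderedCancelAddMonoid G] (v : ι → β → G)
    {X : Set (ι → β)} (hfin : X.Finite) (hne : X.Nonempty)
    (hperm : ∀ A ∈ X, ∀ σ : Equiv.Perm ι, A ∘ σ ∈ X) :
    ∃ A ∈ X, IsPermOptimal (fun i j ↦ v i (A j)) ∧
      ∀ i b, update A i b ∈ X → v i b ≤ v i (A i) := by
  obtain ⟨A, hA, hmax⟩ := Set.exists_max_image X (fun A ↦ ∑ i, v i (A i)) hfin hne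
  refine ⟨A, hA, fun σ ↦ hmax _ (hperm A hA σ), fun i b hb ↦ ?_⟩
  by_contra! hlt
  refine (hmax _ hb).not_gt (sum_lt_sum (fun k _ ↦ ?_) ⟨i, mem_univ i, by simpa using hlt⟩)
  obtain rfl | hk := eq_or_ne k i
  · simpa using hlt.le
  · simp [hk]

end PermOptimal

section Potential

/-- The total weight of the edges of the walk visiting the vertices of a list in order, where the
edge from `x` to `y` weighs `e x y`. -/
def pathWeight [AddMonoid G] (e : ι → ι → G) : List ι → G
  | x :: y :: l => e x y + pathWeight e (y :: l)
  | _ => 0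

lemma pathWeight_append_cons [AddMonoid G] (e : ι → ι → G) (x : ι) (l₂ : List ι) :
    ∀ l₁, pathWeight e (l₁ ++ x :: l₂) = pathWeight e (l₁ ++ [x]) + pathWeight e (x :: l₂)
  | [] => by simp [pathWeight]
  | [y] => by simp [pathWeight]
  | y :: z :: l => by
    have ih := pathWeight_append_cons e x l₂ (z :: l)
    simp only [List.cons_append] at ih
    simp [pathWeight, add_assoc, ih]

-- Closing the path from `y` into a cycle through `x` replaces the edge `z → y` by `z → x → y`.
lemma sum_formPerm [Fintype ι] [DecidableEq ι] [AddCommGroup G] {e : ι → ι → G}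
    (he : ∀ i, e i i = 0) (l : List ι) :
    ∀ x, (x :: l).Nodup → ∑ i, e i ((x :: l).formPerm i) =
      pathWeight e (x :: l) + e ((x :: l).getLast (List.cons_ne_nil x l)) x := by
  induction l with
  | nil => simp [pathWeight, he]
  | cons y l ih =>
    intro x h
    obtain ⟨hx, hyl⟩ := List.nodup_cons.1 h
    have hsum := ih y hyl
    set σ := (y :: l).formPerm with hσ
    set z := (y :: l).getLast (List.cons_ne_nil y l) with hz
    have hσz : σ z = y := List.formPerm_apply_getLast y l
    have hσx : σ x = x := List.formPerm_apply_of_notMem hx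
    have hzx : z ≠ x := fun hzx ↦ hx (hzx ▸ List.getLast_mem _)
    have hyx : y ≠ x := fun hyx ↦ hx (by simp [hyx])
    have hsplice (i : ι) : e i ((x :: y :: l).formPerm i) =
        e i (σ i) + (if i = x then e x y else 0) + (if i = z then e z x - e z y else 0) := by
      rw [List.formPerm_cons_cons, Equiv.Perm.mul_apply, ← hσ]
      rcases eq_or_ne i x with rfl | hix
      · simp [hσx, hzx.symm, he]
      rcases eq_or_ne i z with rfl | hiz
      · simp [hσz, hix]
      · have hσix : σ i ≠ x := fun h ↦ hix (σ.injective (h.trans hσx.symm))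
        have hσiy : σ i ≠ y := fun h ↦ hiz (σ.injective (h.trans hσz.symm))
        simp [hix, hiz, Equiv.swap_apply_of_ne_of_ne hσix hσiy]
    simp only [hsplice, sum_add_distrib, sum_ite_eq', mem_univ, if_true, hsum, pathWeight,
      List.getLast_cons (List.cons_ne_nil y l), ← hz]
    abel

variable [Fintype ι] [AddCommGroup G] [LinearOrder G] [IsOrderedAddMonoid G]

lemma IsPermOptimal.exists_path_ge {e : ι → ι → G} (he : ∀ i, e i i = 0) (h : IsPermOptimal e)
    (i j : ι) {l : List ι} (hl : (j :: l).Nodup) :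
    ∃ l', (i :: l').Nodup ∧ e i j + pathWeight e (j :: l) ≤ pathWeight e (i :: l') := by
  classical
  by_cases hi : i ∈ j :: l
  · obtain ⟨l₁, l₂, hsplit⟩ := List.append_of_mem hi
    refine ⟨l₂, hl.sublist (hsplit ▸ List.sublist_append_right l₁ _), ?_⟩
    rw [hsplit, pathWeight_append_cons, ← add_assoc]
    refine add_le_of_nonpos_left ?_
    rcases List.cons_eq_append_iff.1 hsplit with ⟨rfl, hij⟩ | ⟨m, rfl, rfl⟩
    · simp [pathWeight, (List.cons.inj hij).1, he]
    · have hcycle : (j :: (m ++ [i])).Nodup := hl.sublist (by simp)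
      simpa [he, sum_formPerm he _ j hcycle, add_comm] using h (j :: (m ++ [i])).formPerm
  · exact ⟨j :: l, List.nodup_cons.2 ⟨hi, hl⟩, le_rfl⟩

lemma IsPermOptimal.exists_potential {w : ι → ι → G} (hw : IsPermOptimal w) :
    ∃ p : ι → G, (∀ i, 0 ≤ p i) ∧ ∀ i j, w i j + p j ≤ w i i + p i := by
  let e i j := w i j - w i i
  have he : IsPermOptimal e := fun σ ↦ by simpa [e] using hw σ
  have hpaths (i : ι) : {l : List ι | (i :: l).Nodup}.Finite :=
    (List.finite_length_le ι (Fintype.card ι)).subset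
      fun l hl ↦ (List.nodup_cons.1 hl).2.length_le_card
  choose L hL hLmax using fun i ↦
    Set.exists_max_image _ (fun l ↦ pathWeight e (i :: l)) (hpaths i) ⟨[], List.nodup_singleton i⟩
  refine ⟨fun i ↦ pathWeight e (i :: L i), fun i ↦ ?_, fun i j ↦ ?_⟩
  · exact hLmax i [] (List.nodup_singleton i)
  · obtain ⟨l, hl, hle⟩ := he.exists_path_ge (by simp [e]) i j (hL j)
    have := hle.trans (hLmax i l hl)
    grind

end Potential

section Allocation

/-- `A i` is the bundle that agent `i` receives when exactly the items of `M` are distributed. -/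
structure IsAllocation (A : ι → Finset α) (M : Finset α) : Prop where
  disjoint : Pairwise (Disjoint on A)
  mem_iff : ∀ t, t ∈ M ↔ ∃ i, t ∈ A i

namespace IsAllocation

variable {A B : ι → Finset α} {M N : Finset α}

lemma subset (hA : IsAllocation A M) (i : ι) : A i ⊆ M := fun t ht ↦ (hA.mem_iff t).2 ⟨i, ht⟩

lemma subset_of_forall (hA : IsAllocation A M) (h : ∀ i, A i ⊆ N) : M ⊆ N := fun t ht ↦
  let ⟨i, hi⟩ := (hA.mem_iff t).1 ht
  h i hi

lemma sup [DecidableEq α] (hA : IsAllocation A M) (hB : IsAllocation B N) (h : Disjoint M N) :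
    IsAllocation (A ⊔ B) (M ∪ N) where
  disjoint i j hij := by
    simp only [onFun, Pi.sup_apply, sup_eq_union, disjoint_union_left, disjoint_union_right]
    exact ⟨⟨hA.disjoint hij, (h.mono (hA.subset j) (hB.subset i)).symm⟩,
      h.mono (hA.subset i) (hB.subset j), hB.disjoint hij⟩
  mem_iff t := by simp [hA.mem_iff, hB.mem_iff, exists_or]

end IsAllocation

lemma isAllocation_biUnion [Fintype ι] [DecidableEq α] {A : ι → Finset α}
    (hA : Pairwise (Disjoint on A)) : IsAllocation A (univ.biUnion A) :=
  ⟨hA, by simp⟩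

/-- The value to agent `i` of the bundle of agent `j`. -/
def bundleValue [AddCommMonoid G] (u : ι → α → G) (A : ι → Finset α) (i j : ι) : G :=
  ∑ t ∈ A j, u i t

lemma IsAllocation.bundleValue_sup [AddCommMonoid G] [DecidableEq α]
    {A B : ι → Finset α} {M N : Finset α}
    (hA : IsAllocation A M) (hB : IsAllocation B N) (h : Disjoint M N) (u : ι → α → G) :
    bundleValue u (A ⊔ B) = bundleValue u A + bundleValue u B := by
  ext i j
  exact sum_union (h.mono (hA.subset j) (hB.subset j))

lemma pairwise_disjoint_update [DecidableEq ι] {A : ι → Finset α}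
    (hA : Pairwise (Disjoint on A)) {i : ι} {S : Finset α} (hS : ∀ j ≠ i, Disjoint S (A j)) :
    Pairwise (Disjoint on update A i S) := by
  intro j k hjk
  obtain rfl | hj := eq_or_ne j i
  · simpa [onFun, hjk.symm] using hS k hjk.symm
  obtain rfl | hk := eq_or_ne k i
  · simpa [onFun, hj] using (hS j hj).symm
  · simpa [onFun, hj, hk] using hA hjk

end Allocation

section Goods

variable [AddCommGroup G] [LinearOrder G] [IsOrderedAddMonoid G] [Fintype ι] [Finite α]

lemma exists_goods_round [DecidableEq α] (u : ι → α → G) (P : Finset α) :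
    ∃ R ⊆ P, ∃ A : ι → Finset α, IsAllocation A R ∧ (∀ i, #(A i) ≤ 1) ∧
      IsPermOptimal (bundleValue u A) ∧
      ∀ i, 0 ≤ bundleValue u A i i ∧ ∀ s ∈ P \ R, u i s ≤ bundleValue u A i i := by
  classical
  obtain ⟨A, ⟨hdisj, hsmall⟩, hopt, hupd⟩ := exists_isPermOptimal_forall_update_le
    (fun i S ↦ ∑ t ∈ S, u i t)
    (X := {A | Pairwise (Disjoint on A) ∧ ∀ i, A i ⊆ P ∧ #(A i) ≤ 1}) (Set.toFinite _)
    ⟨fun _ ↦ ∅, by simp [Pairwise, onFun], by simp⟩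
    fun A hA σ ↦ ⟨hA.1.comp_of_injective σ.injective, fun i ↦ hA.2 (σ i)⟩
  have hreplace (i : ι) (S : Finset α) (hS : ∀ j ≠ i, Disjoint S (A j)) (hSP : S ⊆ P)
      (hcard : #S ≤ 1) : ∑ t ∈ S, u i t ≤ bundleValue u A i i :=
    hupd i S ⟨pairwise_disjoint_update hdisj hS,
      (forall_update_iff A fun _ T ↦ T ⊆ P ∧ #T ≤ 1).2 ⟨⟨hSP, hcard⟩, fun j _ ↦ hsmall j⟩⟩
  refine ⟨univ.biUnion A, biUnion_subset.2 fun i _ ↦ (hsmall i).1, A, isAllocation_biUnion hdisj,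
    fun i ↦ (hsmall i).2, hopt, fun i ↦ ⟨?_, fun s hs ↦ ?_⟩⟩
  · simpa using hreplace i ∅ (by simp) (by simp) (by simp)
  · simp only [mem_sdiff, mem_biUnion, mem_univ, true_and, not_exists] at hs
    simpa using hreplace i {s} (by simp [hs.2]) (by simp [hs.1]) (by simp)

lemma exists_goods_allocation (u : ι → α → G) (P : Finset α)
    (hP : ∀ t ∈ P, ∃ i, 0 < u i t) :
    ∃ A : ι → Finset α, IsAllocation A P ∧ IsPermOptimal (bundleValue u A) ∧
      (∀ i, 0 ≤ bundleValue u A i i) ∧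
      ∀ i j, bundleValue u A i j ≤ bundleValue u A i i ∨
        ∃ x ∈ A j, bundleValue u A i j ≤ bundleValue u A i i + u i x := by
  classical
  induction P using Finset.strongInduction with
  | H P ih =>
  rcases P.eq_empty_or_nonempty with rfl | ⟨t, ht⟩
  · exact ⟨fun _ ↦ ∅, ⟨by simp [Pairwise, onFun], by simp⟩, by simp [IsPermOptimal, bundleValue],
      by simp [bundleValue], by simp [bundleValue]⟩
  obtain ⟨R, hRP, A, hA, hsmall, hAopt, hround⟩ := exists_goods_round u P
  have hR : R.Nonempty := by
    rw [nonempty_iff_ne_empty]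
    rintro rfl
    obtain ⟨i, hi⟩ := hP t ht
    have hzero : bundleValue u A i i = 0 := by simp [bundleValue, subset_empty.1 (hA.subset i)]
    exact ((hround i).2 t (by simpa using ht)).not_gt (hzero ▸ hi)
  obtain ⟨B, hB, hBopt, hBnonneg, hBef⟩ := ih (P \ R) (sdiff_ssubset hRP hR)
    fun t ht ↦ hP t (mem_sdiff.1 ht).1
  have hdisj : Disjoint R (P \ R) := disjoint_sdiff
  have hval := hA.bundleValue_sup hB hdisj u
  refine ⟨A ⊔ B, union_sdiff_of_subset hRP ▸ hA.sup hB hdisj, hval ▸ hAopt.add hBopt, ?_, ?_⟩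
  · exact fun i ↦ hval ▸ add_nonneg (hround i).1 (hBnonneg i)
  intro i j
  have hrest : bundleValue u B i j ≤ bundleValue u A i i + bundleValue u B i i := by
    rcases hBef i j with h | ⟨x, hx, h⟩
    · exact h.trans (le_add_of_nonneg_left (hround i).1)
    · have := (hround i).2 x (hB.subset j hx)
      grind
  rw [hval]
  rcases Nat.le_one_iff_eq_zero_or_eq_one.1 (hsmall j) with hAj | hAj
  · left
    simpa [bundleValue, card_eq_zero.1 hAj] using hrest
  · obtain ⟨x, hx⟩ := card_eq_one.1 hAj
    have hxval : bundleValue u A i j = u i x := by simp [bundleValue, hx]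
    exact Or.inr ⟨x, by simp [hx], by simp only [Pi.add_apply]; grind⟩

end Goods

section Chores

/-- A round in which `r` agents receive one item of `C` each, possibly along with items of `P`, and
the other agents receive nothing. -/
structure IsChoreRound [Fintype ι] [DecidableEq α] (C P : Finset α) (r : ℕ) (A : ι → Finset α) :
    Prop where
  disjoint : Pairwise (Disjoint on A)
  eq_insert : ∀ i, (A i).Nonempty → ∃ c ∈ C, ∃ Q ⊆ P, A i = insert c Q
  card_nonempty : #{i | (A i).Nonempty} = r

namespace IsChoreRound

variable [Fintype ι] [DecidableEq α] {C P : Finset α} {r : ℕ} {A : ι → Finset α}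

lemma subset_union (h : IsChoreRound C P r A) (i : ι) : A i ⊆ C ∪ P := by
  rcases (A i).eq_empty_or_nonempty with hi | hi
  · simp [hi]
  · obtain ⟨c, hc, Q, hQ, hA⟩ := h.eq_insert i hi
    grind

lemma comp_perm (h : IsChoreRound C P r A) (σ : Equiv.Perm ι) : IsChoreRound C P r (A ∘ σ) where
  disjoint := h.disjoint.comp_of_injective σ.injective
  eq_insert i := h.eq_insert (σ i)
  card_nonempty := h.card_nonempty ▸ card_equiv σ (by simp)

lemma update_insert [DecidableEq ι] (h : IsChoreRound C P r A) {i : ι} (hi : (A i).Nonempty)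
    {c : α} {Q : Finset α} (hc : c ∈ C) (hQ : Q ⊆ P)
    (hdisj : ∀ j ≠ i, Disjoint (insert c Q) (A j)) :
    IsChoreRound C P r (update A i (insert c Q)) where
  disjoint := pairwise_disjoint_update h.disjoint hdisj
  eq_insert := (forall_update_iff A fun _ S ↦ S.Nonempty → ∃ c ∈ C, ∃ Q ⊆ P, S = insert c Q).2
    ⟨fun _ ↦ ⟨c, hc, Q, hQ, rfl⟩, fun j _ ↦ h.eq_insert j⟩
  card_nonempty := by
    rw [← h.card_nonempty]
    congr! 2 with j
    obtain rfl | hj := eq_or_ne j i <;> simp [*]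

lemma card_sdiff_add (h : IsChoreRound C P r A) (hCP : Disjoint C P) {R : Finset α}
    (hA : IsAllocation A R) : #(C \ R) + r = #C := by
  have hR : univ.biUnion (fun i ↦ C ∩ A i) = C ∩ R := by
    ext t
    simp [hA.mem_iff]
  have hbundle (i : ι) : #(C ∩ A i) = if (A i).Nonempty then 1 else 0 := by
    split_ifs with hi
    · obtain ⟨c, hc, Q, hQ, hAi⟩ := h.eq_insert i hi
      have hCQ : C ∩ Q = ∅ := disjoint_iff_inter_eq_empty.1 (hCP.mono_right hQ)
      simp [hAi, inter_insert_of_mem hc, hCQ]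
    · simp [not_nonempty_iff_eq_empty.1 hi]
  have hinter : #(C ∩ R) = r := by
    rw [← hR, card_biUnion fun i _ j _ hij ↦
      (h.disjoint hij).mono inter_subset_right inter_subset_right]
    simp only [hbundle, ← card_filter, h.card_nonempty]
  rw [← hinter, card_sdiff_add_card_inter]

end IsChoreRound

lemma exists_isChoreRound [Fintype ι] [DecidableEq α] {C : Finset α} (P : Finset α) {r : ℕ}
    (hrι : r ≤ Fintype.card ι) (hrC : r ≤ #C) : ∃ A : ι → Finset α, IsChoreRound C P r A := by
  classical
  obtain ⟨T, -, hT⟩ := exists_subset_card_eq (card_univ (α := ι) ▸ hrι)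
  obtain ⟨f, hf⟩ : ∃ f : T ↪ α, ∀ i, f i ∈ C := by
    obtain ⟨f⟩ := Embedding.nonempty_of_card_le (α := T) (β := C) (by simpa [hT] using hrC)
    exact ⟨f.trans (Embedding.subtype _), fun i ↦ (f i).2⟩
  refine ⟨fun i ↦ if hi : i ∈ T then {f ⟨i, hi⟩} else ∅, ?_, fun i hi ↦ ?_, ?_⟩
  · intro i j hij
    by_cases hi : i ∈ T <;> by_cases hj : j ∈ T <;> simp [onFun, hi, hj, hij]
  · have hiT : i ∈ T := by by_contra h; simp [h] at hi
    exact ⟨_, hf ⟨i, hiT⟩, ∅, by simp, by simp [hiT]⟩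
  · rw [← hT]
    congr 1
    ext i
    by_cases hi : i ∈ T <;> simp [hi]

variable [AddCommGroup G] [LinearOrder G] [IsOrderedAddMonoid G] [Fintype ι] [Finite α]

lemma exists_chore_round [DecidableEq α] (u : ι → α → G) {C P : Finset α}
    (hCP : Disjoint C P) {r : ℕ} (hrι : r ≤ Fintype.card ι) (hrC : r ≤ #C) :
    ∃ R, ∃ A : ι → Finset α, IsAllocation A R ∧ IsChoreRound C P r A ∧
      IsPermOptimal (bundleValue u A) ∧
      ∀ i, (A i).Nonempty → ∃ c ∈ A i, c ∈ C ∧ u i c ≤ bundleValue u A i i ∧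
        (∀ p ∈ P \ R, u i p ≤ 0) ∧ ∀ s ∈ C \ R, u i s ≤ u i c := by
  classical
  obtain ⟨A, hA : IsChoreRound C P r A, hopt, hupd⟩ := exists_isPermOptimal_forall_update_le
    (fun i S ↦ ∑ t ∈ S, u i t) (X := {A | IsChoreRound C P r A}) (Set.toFinite _)
    (exists_isChoreRound P hrι hrC) fun A hA σ ↦ hA.comp_perm σ
  refine ⟨univ.biUnion A, A, isAllocation_biUnion hA.disjoint, hA, hopt, fun i hi ↦ ?_⟩
  obtain ⟨c, hc, Q, hQ, hAi⟩ := hA.eq_insert i hi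
  have hnotMem {d : α} (hd : d ∈ C) {S : Finset α} (hS : S ⊆ P) : d ∉ S :=
    fun h ↦ disjoint_left.1 hCP hd (hS h)
  have hreplace {d : α} (hd : d ∈ C) {S : Finset α} (hS : S ⊆ P)
      (hdisj : ∀ j ≠ i, Disjoint (insert d S) (A j)) :
      u i d + ∑ t ∈ S, u i t ≤ bundleValue u A i i := by
    simpa [bundleValue, sum_insert (hnotMem hd hS)] using hupd i _ (hA.update_insert hi hd hS hdisj)
  have hval : bundleValue u A i i = u i c + ∑ t ∈ Q, u i t := by
    simp [bundleValue, hAi, sum_insert (hnotMem hc hQ)]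
  have hother : ∀ j ≠ i, Disjoint (insert c Q) (A j) := fun j hj ↦ hAi ▸ hA.disjoint hj.symm
  simp only [disjoint_insert_left] at hother
  simp only [mem_sdiff, mem_biUnion, mem_univ, true_and, not_exists]
  refine ⟨c, by simp [hAi], hc, ?_, fun p hp ↦ ?_, fun s hs ↦ ?_⟩
  · simpa using hreplace hc (empty_subset P) (by simpa using fun j hj ↦ (hother j hj).1)
  · have hpQ : p ∉ Q := fun h ↦ hp.2 i (by simp [hAi, h])
    simpa [hval, sum_insert hpQ] using hreplace hc (insert_subset hp.1 hQ)
      fun j hj ↦ by simp [hother j hj, hp.2 j]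
  · simpa [hval] using hreplace hs.1 hQ fun j hj ↦ by simp [hother j hj, hs.2 j]

-- The witnesses are the last chore `z` of `i` and the first chore `s` of `j`: apart from them, each
-- chore of `i` is handed out one round before a chore of `j`, so `i` finds it no worse.
lemma exists_chores_allocation (u : ι → α → G) (k : ℕ) (C : Finset α)
    (hC : #C = Fintype.card ι * k) :
    ∃ A : ι → Finset α, IsAllocation A C ∧ IsPermOptimal (bundleValue u A) ∧
      ∀ i j, bundleValue u A i j ≤ bundleValue u A i i ∨
        ∃ z ∈ A i, ∃ s ∈ A j, bundleValue u A i j + u i z ≤ bundleValue u A i i + u i s := by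
  classical
  induction k generalizing C with
  | zero =>
    obtain rfl : C = ∅ := by simpa using hC
    exact ⟨fun _ ↦ ∅, ⟨by simp [Pairwise, onFun], by simp⟩, by simp [IsPermOptimal, bundleValue],
      by simp [bundleValue]⟩
  | succ k ih =>
    rw [Nat.mul_succ] at hC
    obtain ⟨R, A, hA, hround, hAopt, hAex⟩ :=
      exists_chore_round u (disjoint_empty_right C) le_rfl (by omega : Fintype.card ι ≤ #C)
    have hRC : R ⊆ C := by simpa using hA.subset_of_forall hround.subset_union
    have hcard := hround.card_sdiff_add (disjoint_empty_right C) hA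
    have hne (i : ι) : (A i).Nonempty := by
      have hall := (card_eq_iff_eq_univ _).1 hround.card_nonempty
      simpa using hall.ge (mem_univ i)
    have hsingle (i : ι) : ∃ c, A i = {c} ∧ ∀ s ∈ C \ R, u i s ≤ u i c := by
      obtain ⟨c, hc, -, -, -, hmax⟩ := hAex i (hne i)
      obtain ⟨d, -, Q, hQ, hAi⟩ := hround.eq_insert i (hne i)
      simp only [subset_empty.1 hQ, insert_empty_eq] at hAi
      obtain rfl : c = d := by simpa [hAi] using hc
      exact ⟨c, hAi, hmax⟩
    choose c hc hcmax using hsingle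
    obtain ⟨B, hB, hBopt, hBex⟩ := ih (C \ R) (by omega)
    have hdisj : Disjoint R (C \ R) := disjoint_sdiff
    have hval := hA.bundleValue_sup hB hdisj u
    refine ⟨A ⊔ B, union_sdiff_of_subset hRC ▸ hA.sup hB hdisj, hval ▸ hAopt.add hBopt,
      fun i j ↦ Or.inr ?_⟩
    have hAval (i j : ι) : bundleValue u A i j = u i (c j) := by simp [bundleValue, hc]
    simp only [hval, Pi.add_apply, hAval, Pi.sup_apply, sup_eq_union, mem_union]
    rcases hBex i j with h | ⟨z, hz, s, hs, h⟩
    · exact ⟨c i, by simp [hc], c j, by simp [hc], by grind⟩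
    · have := hcmax i s (hB.subset j hs)
      exact ⟨z, Or.inr hz, c j, by simp [hc], by grind⟩

end Chores

section StrongEF1

/-- Agent `i` does not envy agent `j` up to removing one item, where an item removed from the own
bundle must be a chore for everyone. The latter makes the notion stable under ungluing items. -/
def IsStrongEF1 [AddCommMonoid G] [LE G] (u : ι → α → G) (A : ι → Finset α) (i j : ι) : Prop :=
  bundleValue u A i j ≤ bundleValue u A i i ∨
    (∃ x ∈ A j, bundleValue u A i j ≤ bundleValue u A i i + u i x) ∨
    ∃ x ∈ A i, (∀ k, u k x ≤ 0) ∧ bundleValue u A i j + u i x ≤ bundleValue u A i i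

lemma IsStrongEF1.exists_erase_le [AddCommGroup G] [Preorder G] [IsOrderedAddMonoid G]
    [DecidableEq α] {u : ι → α → G} {A : ι → Finset α} {i j : ι}
    (h : IsStrongEF1 u A i j) (hij : i ≠ j → Disjoint (A i) (A j)) :
    ∑ t ∈ A j, u i t ≤ ∑ t ∈ A i, u i t ∨
      ∃ t ∈ A i ∪ A j, ∑ s ∈ (A j).erase t, u i s ≤ ∑ s ∈ (A i).erase t, u i s := by
  obtain rfl | hne := eq_or_ne i j
  · exact Or.inl le_rfl
  have hdisj := disjoint_left.1 (hij hne)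
  refine h.imp_right ?_
  rintro (⟨x, hx, h⟩ | ⟨x, hx, -, h⟩)
  · refine ⟨x, mem_union_right _ hx, ?_⟩
    rw [erase_eq_of_notMem fun hxi ↦ hdisj hxi hx, sum_erase_eq_sub hx]
    exact sub_le_iff_le_add.2 h
  · refine ⟨x, mem_union_left _ hx, ?_⟩
    rw [erase_eq_of_notMem (hdisj hx), sum_erase_eq_sub hx]
    exact le_sub_iff_add_le.2 h

end StrongEF1

section ChoresDominate

/-- Every agent values any set of items of `P`, together with any item of `C`, at most at zero. -/
def ChoresDominate [AddCommMonoid G] [LE G] (u : ι → α → G) (C P : Finset α) : Prop :=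
  ∀ c ∈ C, ∀ S ⊆ P, ∀ i, u i c + ∑ t ∈ S, u i t ≤ 0

section

variable [AddCommMonoid G] [LE G] {u : ι → α → G} {C P : Finset α}

lemma ChoresDominate.nonpos (hdom : ChoresDominate u C P) {c : α} (hc : c ∈ C) (i : ι) :
    u i c ≤ 0 := by
  simpa using hdom c hc ∅ (empty_subset P) i

lemma ChoresDominate.bundleValue_add_nonpos (hdom : ChoresDominate u C P) [Fintype ι]
    [DecidableEq α] {r : ℕ} {A B : ι → Finset α} (hA : IsChoreRound C P r A) (hCP : Disjoint C P)
    {j : ι} (hj : (A j).Nonempty) (hBP : B j ⊆ P) (hAB : Disjoint (A j) (B j)) (i : ι) :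
    bundleValue u A i j + bundleValue u B i j ≤ 0 := by
  obtain ⟨c, hc, Q, hQ, hAj⟩ := hA.eq_insert j hj
  have hcQB : c ∉ Q ∪ B j := fun h ↦ disjoint_left.1 hCP hc (union_subset hQ hBP h)
  have hsum : bundleValue u A i j + bundleValue u B i j = u i c + ∑ t ∈ Q ∪ B j, u i t := by
    rw [← sum_insert hcQB, ← insert_union, ← hAj, sum_union hAB, bundleValue, bundleValue]
  exact hsum ▸ hdom c hc _ (union_subset hQ hBP) i

end

variable [AddCommGroup G] [LinearOrder G] [IsOrderedAddMonoid G]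
variable [Fintype ι] [Nonempty ι] [Finite α] [DecidableEq α]

lemma exists_allocation_sdiff_of_choresDominate (u : ι → α → G) {C P : Finset α}
    (hCP : Disjoint C P) (hP : ∀ t ∈ P, ∃ i, 0 < u i t) (hdom : ChoresDominate u C P) :
    ∃ K ⊆ C, Fintype.card ι ∣ #K ∧ ∃ A : ι → Finset α, IsAllocation A ((C ∪ P) \ K) ∧
      IsPermOptimal (bundleValue u A) ∧
      ∀ i j, IsStrongEF1 u A i j ∧
        ∀ s ∈ K, bundleValue u A i j + u i s ≤ bundleValue u A i i := by
  obtain ⟨R, A, hA, hround, hAopt, hAex⟩ := exists_chore_round u hCP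
    (Nat.mod_lt #C Fintype.card_pos).le (Nat.mod_le #C (Fintype.card ι))
  obtain ⟨B, hB, hBopt, hBnonneg, hBef⟩ := exists_goods_allocation u (P \ R)
    fun t ht ↦ hP t (mem_sdiff.1 ht).1
  have hcard := hround.card_sdiff_add hCP hA
  have hBP (j : ι) : B j ⊆ P := (hB.subset j).trans sdiff_subset
  have hRP : Disjoint R (P \ R) := disjoint_sdiff
  have hval := hA.bundleValue_sup hB hRP u
  have hunion : R ∪ P \ R = (C ∪ P) \ (C \ R) := by
    grind [hA.subset_of_forall hround.subset_union, disjoint_left]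
  have hzero {k : ι} (hk : A k = ∅) (l : ι) : bundleValue u A l k = 0 := by simp [bundleValue, hk]
  refine ⟨C \ R, sdiff_subset, ⟨#C / Fintype.card ι, ?_⟩, A ⊔ B, hunion ▸ hA.sup hB hRP,
    hval ▸ hAopt.add hBopt, fun i j ↦ ?_⟩
  · have := Nat.div_add_mod #C (Fintype.card ι)
    omega
  have hBi := hBnonneg i
  have hnonpos (hj : (A j).Nonempty) : bundleValue u A i j + bundleValue u B i j ≤ 0 :=
    hdom.bundleValue_add_nonpos hround hCP hj (hBP j) (hRP.mono (hA.subset j) (hB.subset j)) i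
  simp only [IsStrongEF1, hval, Pi.add_apply, Pi.sup_apply, sup_eq_union, mem_union]
  rcases (A i).eq_empty_or_nonempty with hi | hi
  · rw [hzero hi]
    rcases (A j).eq_empty_or_nonempty with hj | hj
    · rw [hzero hj]
      refine ⟨?_, fun s hs ↦ ?_⟩
      · simpa [hj] using (hBef i j).imp_right Or.inl
      · have : u i s + bundleValue u B i j ≤ 0 := hdom s (mem_sdiff.1 hs).1 (B j) (hBP j) i
        grind
    · have := hnonpos hj
      refine ⟨Or.inl (by grind), fun s hs ↦ ?_⟩
      have := hdom.nonpos (mem_sdiff.1 hs).1 i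
      grind
  · obtain ⟨c, hc, hcC, hcle, hPneg, hCmax⟩ := hAex i hi
    have hj : bundleValue u A i j + bundleValue u B i j ≤ 0 := by
      rcases (A j).eq_empty_or_nonempty with hj | hj
      · rw [hzero hj, zero_add]
        exact sum_nonpos fun p hp ↦ hPneg p (hB.subset j hp)
      · exact hnonpos hj
    refine ⟨Or.inr (Or.inr ⟨c, Or.inl hc, hdom.nonpos hcC, by grind⟩), fun s hs ↦ ?_⟩
    have := hCmax s hs
    grind

lemma exists_allocation_of_choresDominate (u : ι → α → G) {C P : Finset α}
    (hCP : Disjoint C P) (hP : ∀ t ∈ P, ∃ i, 0 < u i t) (hdom : ChoresDominate u C P) :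
    ∃ A : ι → Finset α, IsAllocation A (C ∪ P) ∧ IsPermOptimal (bundleValue u A) ∧
      ∀ i j, IsStrongEF1 u A i j := by
  obtain ⟨K, hKC, ⟨k, hk⟩, A, hA, hAopt, hAef⟩ :=
    exists_allocation_sdiff_of_choresDominate u hCP hP hdom
  obtain ⟨D, hD, hDopt, hDex⟩ := exists_chores_allocation u k K hk
  have hdisj : Disjoint ((C ∪ P) \ K) K := sdiff_disjoint
  have hval := hA.bundleValue_sup hD hdisj u
  have hunion : (C ∪ P) \ K ∪ K = C ∪ P :=
    sdiff_union_of_subset (hKC.trans subset_union_left)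
  refine ⟨A ⊔ D, hunion ▸ hA.sup hD hdisj, hval ▸ hAopt.add hDopt, fun i j ↦ ?_⟩
  simp only [IsStrongEF1, hval, Pi.add_apply, Pi.sup_apply, sup_eq_union, mem_union]
  obtain ⟨hAij, hAK⟩ := hAef i j
  rcases hDex i j with hDij | ⟨z, hz, s, hs, hDij⟩
  · rcases hAij with hAij | ⟨x, hx, hAij⟩ | ⟨x, hx, hneg, hAij⟩
    · exact Or.inl (add_le_add hAij hDij)
    · exact Or.inr (Or.inl ⟨x, Or.inl hx, by grind⟩)
    · exact Or.inr (Or.inr ⟨x, Or.inl hx, hneg, by grind⟩)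
  · have := hAK s (hD.subset j hs)
    exact Or.inr (Or.inr ⟨z, Or.inr hz, hdom.nonpos (hKC (hD.subset i hz)), by grind⟩)

end ChoresDominate

section Gluing

lemma nonempty_of_add_sum_pos [AddCommMonoid G] [Preorder G] {u : ι → α → G} {c : α} {S : Finset α}
    (hc : ∀ i, u i c ≤ 0) (hS : ∃ i, 0 < u i c + ∑ t ∈ S, u i t) : S.Nonempty := by
  rw [nonempty_iff_ne_empty]
  rintro rfl
  obtain ⟨i, hi⟩ := hS
  exact (hc i).not_gt (by simpa using hi)

variable [DecidableEq α]

/-- The utilities after gluing the items of `S` to the item `c`, which then stands for the whole set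
`insert c S`. -/
def gluedUtility [AddCommMonoid G] (u : ι → α → G) (c : α) (S : Finset α) (i : ι) : α → G :=
  update (u i) c (u i c + ∑ t ∈ S, u i t)

/-- Turns bundles of the glued instance into bundles of the original one: the owner of `c` also
receives `S`. -/
def unglue (c : α) (S : Finset α) (A : ι → Finset α) (i : ι) : Finset α :=
  if c ∈ A i then A i ∪ S else A i

variable {c : α} {S M : Finset α} {A : ι → Finset α}

lemma isAllocation_unglue (hA : IsAllocation A (M \ S)) (hc : c ∈ M \ S) (hSM : S ⊆ M) :
    IsAllocation (unglue c S A) M where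
  disjoint i j hij := by
    have hAS (k : ι) : Disjoint (A k) S := disjoint_sdiff.symm.mono_left (hA.subset k)
    have hAij := hA.disjoint hij
    simp only [onFun, unglue, disjoint_left] at hAS hAij ⊢
    grind
  mem_iff t := by
    obtain ⟨k, hk⟩ := (hA.mem_iff c).1 hc
    have := hA.mem_iff t
    simp only [unglue]
    grind

lemma bundleValue_unglue [AddCommMonoid G] {u : ι → α → G} (hAS : ∀ j, Disjoint (A j) S) :
    bundleValue u (unglue c S A) = bundleValue (gluedUtility u c S) A := by
  ext i j
  by_cases hc : c ∈ A j
  · simp only [bundleValue, unglue, gluedUtility, if_pos hc, sum_update_of_mem hc,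
      sum_union (hAS j)]
    rw [sum_eq_add_sum_sdiff_singleton_of_mem hc]
    abel
  · simp only [bundleValue, unglue, gluedUtility, if_neg hc, sum_update_of_notMem hc]

lemma isStrongEF1_unglue [AddCommGroup G] [LinearOrder G] [IsOrderedAddMonoid G]
    {u : ι → α → G} (hAS : ∀ j, Disjoint (A j) S) (hc : ∀ i, u i c ≤ 0)
    (hS : Minimal (fun T ↦ ∃ i, 0 < u i c + ∑ t ∈ T, u i t) S) {i j : ι}
    (h : IsStrongEF1 (gluedUtility u c S) A i j) : IsStrongEF1 u (unglue c S A) i j := by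
  have hsub (k : ι) : A k ⊆ unglue c S A k := by
    unfold unglue
    split_ifs <;> simp
  have hother {x : α} (hx : x ≠ c) (k : ι) : gluedUtility u c S k x = u k x := by
    simp [gluedUtility, hx]
  simp only [IsStrongEF1, bundleValue_unglue hAS]
  rcases h with h | ⟨x, hx, h⟩ | ⟨x, hx, hneg, h⟩
  · exact Or.inl h
  · right; left
    obtain rfl | hxc := eq_or_ne x c
    · obtain ⟨p, hp⟩ := nonempty_of_add_sum_pos hc hS.prop
      have hrest : u i x + ∑ t ∈ S.erase p, u i t ≤ 0 := by
        by_contra! hlt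
        exact hS.not_prop_of_lt (erase_ssubset hp) ⟨i, hlt⟩
      have hglued : gluedUtility u x S i x ≤ u i p := by
        simp only [gluedUtility, update_self, ← add_sum_erase _ _ hp]
        grind
      exact ⟨p, by simp [unglue, hx, hp], h.trans (add_le_add_right hglued _)⟩
    · exact ⟨x, hsub j hx, by rwa [← hother hxc]⟩
  · right; right
    have hxc : x ≠ c := by
      rintro rfl
      obtain ⟨k, hk⟩ := hS.prop
      exact (hneg k).not_gt (by simpa [gluedUtility] using hk)
    exact ⟨x, hsub i hx, fun k ↦ hother hxc k ▸ hneg k, hother hxc i ▸ h⟩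

end Gluing

section Main

variable [AddCommGroup G] [LinearOrder G] [IsOrderedAddMonoid G]
variable [Fintype ι] [Nonempty ι]

theorem exists_allocation_isPermOptimal_isStrongEF1 [Finite α] (M : Finset α) (u : ι → α → G) :
    ∃ A : ι → Finset α, IsAllocation A M ∧ IsPermOptimal (bundleValue u A) ∧
      ∀ i j, IsStrongEF1 u A i j := by
  classical
  induction M using Finset.strongInduction generalizing u with
  | H M ih =>
  set C := {t ∈ M | ∀ i, u i t ≤ 0}
  set P := {t ∈ M | ¬ ∀ i, u i t ≤ 0}
  by_cases hdom : ChoresDominate u C P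
  · rw [← filter_union_filter_not_eq (fun t ↦ ∀ i, u i t ≤ 0) M]
    exact exists_allocation_of_choresDominate u (disjoint_filter_filter_not ..) (by simp) hdom
  · simp only [ChoresDominate, not_forall, not_le] at hdom
    obtain ⟨c, hc, S₀, hS₀P, hS₀⟩ := hdom
    obtain ⟨S, hSS₀, hS⟩ :=
      exists_minimal_le_of_wellFoundedLT (fun T ↦ ∃ i, 0 < u i c + ∑ t ∈ T, u i t) S₀ hS₀
    have hSP : S ⊆ P := hSS₀.trans hS₀P
    have hSM : S ⊆ M := hSP.trans (filter_subset ..)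
    obtain ⟨hcM, hcneg⟩ := mem_filter.1 hc
    have hcS : c ∉ S := fun h ↦ (mem_filter.1 (hSP h)).2 hcneg
    have hSne := nonempty_of_add_sum_pos hcneg hS.prop
    obtain ⟨A, hA, hopt, hef⟩ := ih (M \ S) (sdiff_ssubset hSM hSne) (gluedUtility u c S)
    have hAS (j : ι) : Disjoint (A j) S := sdiff_disjoint.mono_left (hA.subset j)
    refine ⟨unglue c S A, isAllocation_unglue hA (mem_sdiff.2 ⟨hcM, hcS⟩) hSM, ?_, fun i j ↦ ?_⟩
    · rwa [bundleValue_unglue hAS]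
    · exact isStrongEF1_unglue hAS hcneg hS (hef i j)

theorem ef1_and_envy_freeable_exists_general [Fintype α] [DecidableEq α] (u : ι → α → G) :
    ∃ A : ι → Finset α,
      (∀ i j, i ≠ j → Disjoint (A i) (A j)) ∧
      (Finset.univ.biUnion A = Finset.univ) ∧
      (∀ i j : ι,
        (∑ t ∈ A i, u i t) ≥ (∑ t ∈ A j, u i t) ∨
          ∃ t ∈ A i ∪ A j,
            (∑ s ∈ (A i).erase t, u i s) ≥ ∑ s ∈ (A j).erase t, u i s) ∧
      (∃ p : ι → G, (∀ i, 0 ≤ p i) ∧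
        ∀ i j : ι, (∑ t ∈ A i, u i t) + p i ≥ (∑ t ∈ A j, u i t) + p j) := by
  obtain ⟨A, hA, hopt, hef⟩ := exists_allocation_isPermOptimal_isStrongEF1 univ u
  obtain ⟨p, hp, henvy⟩ := hopt.exists_potential
  refine ⟨A, hA.disjoint, ?_, fun i j ↦ (hef i j).exists_erase_le (hA.disjoint ·), p, hp, henvy⟩
  ext t
  simpa using (hA.mem_iff t).1 (mem_univ t)

end Main

/-- With indivisible goods and chores (additive utilities), an allocation that is
simultaneously EF1 and envy-freeable always exists. -/
theorem ef1_and_envy_freeable_exists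
    (n : ℕ) (hn : 0 < n) (I : Type) [Fintype I] [DecidableEq I]
    (u : Fin n → I → ℝ) :
    ∃ A : Fin n → Finset I,
      -- (A_1, …, A_n) is a partition of the items
      (∀ i j, i ≠ j → Disjoint (A i) (A j)) ∧
      (Finset.univ.biUnion A = Finset.univ) ∧
      -- EF1
      (∀ i j : Fin n,
        (∑ t ∈ A i, u i t) ≥ (∑ t ∈ A j, u i t) ∨
          ∃ t ∈ A i ∪ A j,
            (∑ s ∈ (A i).erase t, u i s) ≥ ∑ s ∈ (A j).erase t, u i s) ∧
      -- envy-freeable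
      (∃ p : Fin n → ℝ, (∀ i, 0 ≤ p i) ∧
        ∀ i j : Fin n, (∑ t ∈ A i, u i t) + p i ≥ (∑ t ∈ A j, u i t) + p j) := by
  have := Fin.pos_iff_nonempty.1 hn
  exact ef1_and_envy_freeable_exists_general u
end

section
/- Let n ≥ 2 and let each agent i ∈ {1,…,n} have a utility over the cake C = [0,1] given by a nonnegative integrable density f_i with ∫_0^1 f_i(x) dx = 1. Then, for every α ∈ [0,1], there exists a set I_α ⊆ [0,1] that is a union of at most n intervals and satisfies ∫_{I_α} f_i(x) dx = α for every agent i. -/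
open MeasureTheory

/-!
Cut the cake into many small pieces. Giving `+`, `-` or nothing to each of the `N` pieces is
choosing a point of the octahedral sphere `{+, -, 0}ᴺ`, and Tucker's lemma, proved by Ky Fan's
parity count over flags of faces, yields a two-coloring of the pieces with at most `n` color changes
that nearly halves the cake for all `n` agents.

Halving a set `A` along a coloring `B` splits it into two sets with at most `cuts A + 2 cuts B` cuts
in total. If `A` has fewer than `2 n` cuts, these are fewer than `4 n`, so one of the two halves has
again fewer than `2 n`. The complement of a set has the same number of cuts. Following the binary
expansion of `α`, halving and complementing reach any share `α` approximately with fewer than `2 n`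
cuts, that is, with at most `n` intervals. Compactness of the space of endpoints makes it exact.
-/

open Finset

section Alternation

variable {L : Type*} (sgn : L → Bool)

/-- The indicator, modulo `2`, of the words whose signs alternate and begin with `e`. -/
def altWord : Bool → List L → ZMod 2
  | _, [] => 1
  | e, a :: l => if sgn a = e then altWord (!e) l else 0

lemma altWord_map {f : L → L} (hf : ∀ a, sgn (f a) = !sgn a) (e : Bool) (l : List L) :
    altWord sgn e (l.map f) = altWord sgn (!e) l := by
  induction l generalizing e with
  | nil => rfl
  | cons a l ih => simp [altWord, hf, ih, Bool.not_eq_eq_eq_not]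

lemma isChain_sgn_ne_of_altWord_ne_zero {e : Bool} {l : List L} (h : altWord sgn e l ≠ 0) :
    l.IsChain (sgn · ≠ sgn ·) := by
  induction l generalizing e with
  | nil => exact .nil
  | cons a l ih =>
    obtain ⟨rfl, hl⟩ : sgn a = e ∧ altWord sgn (!e) l ≠ 0 := by simpa [altWord] using h
    cases l with
    | nil => exact .singleton a
    | cons b l =>
      obtain ⟨hb, -⟩ : sgn b = !sgn a ∧ _ := by simpa [altWord] using hl
      exact .cons_cons (by simp [hb]) (ih hl)

variable [LinearOrder L]

/-- `altWord` of the increasing enumeration of a multiset of signed labels. -/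
def altMultiset (e : Bool) (M : Multiset L) : ZMod 2 :=
  altWord sgn e (M.sort (· ≤ ·))

lemma altMultiset_zero (e : Bool) : altMultiset sgn e 0 = 1 := by
  simp [altMultiset, altWord]

lemma altMultiset_cons {a : L} {M : Multiset L} (h : ∀ b ∈ M, a ≤ b) (e : Bool) :
    altMultiset sgn e (a ::ₘ M) = if sgn a = e then altMultiset sgn (!e) M else 0 := by
  rw [altMultiset, Multiset.sort_cons _ _ _ h]
  rfl

lemma altMultiset_map {f : L → L} {M : Multiset L} (hf : ∀ a ∈ M, ∀ b ∈ M, a ≤ b ↔ f a ≤ f b)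
    (hsgn : ∀ a, sgn (f a) = !sgn a) (e : Bool) :
    altMultiset sgn e (M.map f) = altMultiset sgn (!e) M := by
  rw [altMultiset, ← Multiset.map_sort f M (· ≤ ·) (· ≤ ·) hf, altWord_map sgn hsgn, altMultiset]

lemma nodup_of_altMultiset_ne_zero {e : Bool} {M : Multiset L} (h : altMultiset sgn e M ≠ 0) :
    M.Nodup := by
  have hle := List.isChain_iff_getElem.1 (Multiset.pairwise_sort M (· ≤ ·)).isChain
  have hne := List.isChain_iff_getElem.1 (isChain_sgn_ne_of_altWord_ne_zero sgn h)
  have hlt : (M.sort (· ≤ ·)).IsChain (· < ·) := List.isChain_iff_getElem.2 fun i hi =>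
    (hle i hi).lt_of_ne fun heq => hne i hi (congrArg sgn heq)
  rw [← Multiset.sort_eq M (· ≤ ·), Multiset.coe_nodup]
  exact hlt.pairwise.imp ne_of_lt

lemma multiset_induction_on_min {P : Multiset L → Prop} (zero : P 0)
    (cons : ∀ a M, (∀ b ∈ M, a ≤ b) → P M → P (a ::ₘ M)) (M : Multiset L) : P M := by
  suffices ∀ l : List L, l.Pairwise (· ≤ ·) → P l by
    simpa using this _ (Multiset.pairwise_sort M (· ≤ ·))
  intro l hl
  induction hl with
  | nil => exact zero
  | cons ha _ ih => exact cons _ _ (by simpa using ha) ih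

lemma sum_altMultiset_erase (e : Bool) (M : Multiset L) :
    (M.map fun a => altMultiset sgn e (M.erase a)).sum =
      altMultiset sgn e M + altMultiset sgn (!e) M := by
  induction M using multiset_induction_on_min generalizing e with
  | zero => simp [altMultiset_zero, CharTwo.add_self_eq_zero]
  | cons a M ha ih =>
    have herase : ∀ b ∈ M, altMultiset sgn e ((a ::ₘ M).erase b) =
        if sgn a = e then altMultiset sgn (!e) (M.erase b) else 0 := fun b hb => by
      rw [Multiset.erase_cons_tail_of_mem hb,
        altMultiset_cons sgn fun c hc => ha c (Multiset.mem_of_mem_erase hc)]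
    rw [Multiset.map_cons, Multiset.sum_cons, Multiset.erase_cons_head,
      Multiset.map_congr rfl herase, altMultiset_cons sgn ha, altMultiset_cons sgn ha]
    by_cases hae : sgn a = e
    · simp only [hae, if_true, Bool.eq_not_self, if_false, ih, Bool.not_not]
      rw [add_left_comm, CharTwo.add_self_eq_zero, add_zero]
    · simp [Bool.eq_not.2 hae]

end Alternation

section Octahedron

variable {N : ℕ}

/-- The antipodal map of the octahedral sphere `{+, -, 0}ᴺ`, whose points are encoded as functions
`Fin N → Option Bool` with `none` in place of `0`. -/
def antipode (x : Fin N → Option Bool) : Fin N → Option Bool :=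
  fun c => (x c).map (!·)

/-- The face order of the octahedral sphere: `y` extends the sign pattern `x`. -/
def IsFace (x y : Fin N → Option Bool) : Prop :=
  ∀ c b, x c = some b → y c = some b

lemma antipode_eq_some {x : Fin N → Option Bool} {c : Fin N} {b : Bool} :
    antipode x c = some b ↔ x c = some !b := by
  simp [antipode, Bool.not_eq_eq_eq_not]

lemma antipode_antipode (x : Fin N → Option Bool) : antipode (antipode x) = x := by
  funext c
  cases h : x c <;> simp [antipode, h]

/-- A maximal flag of faces of the octahedral sphere: the positions at which the coordinates become
nonzero, together with the signs they then take. -/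
abbrev SignedFlag (N : ℕ) : Type := Equiv.Perm (Fin N) × (Fin N → Bool)

/-- The `j`-th face of a flag, in which `j + 1` coordinates are nonzero. -/
def SignedFlag.vertex (p : SignedFlag N) (j : ℕ) : Fin N → Option Bool :=
  fun c => if p.1 c ≤ j then some (p.2 c) else none

/-- The flags of the subsphere spanned by the first `k` coordinates. They are encoded as flags in
dimension `N` by fixing the remaining positions and signs. -/
def sphere (N k : ℕ) : Finset (SignedFlag N) :=
  {p | ∀ c : Fin N, k ≤ c → p.1 c = c ∧ p.2 c = true}

/-- The flags of the subsphere spanned by the first `k + 1` coordinates in which the coordinate `k`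
is positive. -/
def hemisphere (k : Fin N) : Finset (SignedFlag N) :=
  {p ∈ sphere N (k + 1) | p.2 k = true}

/-- Reverses the first `k` signs of a flag; on `sphere N k` this is the antipodal map. -/
def SignedFlag.antipode (k : ℕ) (p : SignedFlag N) : SignedFlag N :=
  (p.1, fun c => if c < k then !p.2 c else p.2 c)

lemma mem_sphere {k : ℕ} {p : SignedFlag N} :
    p ∈ sphere N k ↔ ∀ c : Fin N, k ≤ c → p.1 c = c ∧ p.2 c = true := by
  simp [sphere]

lemma SignedFlag.lt_of_mem_sphere {k : ℕ} {p : SignedFlag N} (hp : p ∈ sphere N k) {c : Fin N}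
    (hc : p.1 c < k) : c < k := by
  by_contra! h
  rw [(mem_sphere.1 hp c h).1] at hc
  omega

lemma SignedFlag.exists_vertex_ne_none (p : SignedFlag N) {j : ℕ} (hj : j < N) :
    ∃ c, p.vertex j c ≠ none :=
  ⟨p.1.symm ⟨j, hj⟩, by simp [SignedFlag.vertex]⟩

lemma SignedFlag.isFace_vertex (p : SignedFlag N) {i j : ℕ} (h : i ≤ j) :
    IsFace (p.vertex i) (p.vertex j) := by
  intro c b
  simp only [SignedFlag.vertex, Option.ite_none_right_eq_some]
  exact fun hc => ⟨hc.1.trans h, hc.2⟩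

lemma SignedFlag.vertex_swap (p : SignedFlag N) {i i' : Fin N} (hi : (i' : ℕ) = i + 1) {j : ℕ}
    (hj : j ≠ i) :
    SignedFlag.vertex (p.1.trans (Equiv.swap i i'), p.2) j = p.vertex j := by
  funext c
  have : Equiv.swap i i' (p.1 c) ≤ j ↔ p.1 c ≤ j := by
    rw [Equiv.swap_apply_def]
    split_ifs with h h <;> grind
  simp only [SignedFlag.vertex, Equiv.trans_apply, this]

lemma SignedFlag.vertex_update (p : SignedFlag N) {c : Fin N} (b : Bool) {j : ℕ} (hj : j < p.1 c) :
    SignedFlag.vertex (p.1, Function.update p.2 c b) j = p.vertex j := by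
  funext d
  rcases eq_or_ne d c with rfl | hd
  · simp [SignedFlag.vertex, hj.not_ge]
  · simp [SignedFlag.vertex, hd]

lemma SignedFlag.vertex_antipode {k : ℕ} {p : SignedFlag N} (hp : p ∈ sphere N k) {j : ℕ}
    (hj : j < k) :
    (p.antipode k).vertex j = _root_.antipode (p.vertex j) := by
  funext c
  by_cases hc : p.1 c ≤ j
  · simp [SignedFlag.vertex, SignedFlag.antipode, _root_.antipode, hc,
      SignedFlag.lt_of_mem_sphere hp (hc.trans_lt hj)]
  · simp [SignedFlag.vertex, SignedFlag.antipode, _root_.antipode, hc]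

lemma SignedFlag.antipode_antipode (k : ℕ) (p : SignedFlag N) : (p.antipode k).antipode k = p := by
  ext c
  · rfl
  · simp only [SignedFlag.antipode]
    split_ifs <;> simp

variable {B : Type*} (label : (Fin N → Option Bool) → B)

/-- The labels found on the faces of a flag whose indices lie in `t`. -/
def SignedFlag.labels (p : SignedFlag N) (t : Finset ℕ) : Multiset B :=
  t.val.map fun j => label (p.vertex j)

lemma SignedFlag.labels_congr {p q : SignedFlag N} {t : Finset ℕ}
    (h : ∀ j ∈ t, p.vertex j = q.vertex j) :
    p.labels label t = q.labels label t :=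
  Multiset.map_congr rfl fun j hj => by rw [h j hj]

lemma SignedFlag.sum_labels_erase (F : Multiset B → ZMod 2) [DecidableEq B]
    (p : SignedFlag N) (t : Finset ℕ) :
    ((p.labels label t).map fun a => F ((p.labels label t).erase a)).sum =
      ∑ j ∈ t, F (p.labels label (t.erase j)) := by
  rw [Finset.sum, SignedFlag.labels, Multiset.map_map]
  refine congrArg Multiset.sum (Multiset.map_congr rfl fun j hj => ?_)
  rw [SignedFlag.labels, Finset.erase_val, Multiset.map_erase_of_mem _ _ hj, Function.comp_apply]

/-- A facet of a flag obtained by removing a face other than the last lies in exactly one other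
flag, so that these facets cancel in pairs. -/
lemma sum_hemisphere_labels_erase (F : Multiset B → ZMod 2) (k : Fin N) {j : ℕ} (hj : j < k) :
    ∑ p ∈ hemisphere k, F (p.labels label ((range (k + 1)).erase j)) = 0 := by
  let i : Fin N := ⟨j, by omega⟩
  let i' : Fin N := ⟨j + 1, by omega⟩
  refine Finset.sum_involution (fun p _ => (p.1.trans (Equiv.swap i i'), p.2)) ?_ ?_ ?_ ?_
  · intro p _
    rw [SignedFlag.labels_congr label fun l hl => p.vertex_swap (i := i) (i' := i') rfl
      (Finset.ne_of_mem_erase hl), CharTwo.add_self_eq_zero]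
  · intro p _ _ heq
    have := congrArg (fun q : SignedFlag N => q.1 (p.1.symm i)) heq
    simp [i, i', Fin.ext_iff] at this
  · intro p hp
    simp only [hemisphere, mem_filter, mem_sphere] at hp ⊢
    refine ⟨fun c hc => ⟨?_, (hp.1 c hc).2⟩, hp.2⟩
    rw [Equiv.trans_apply, (hp.1 c hc).1]
    exact Equiv.swap_apply_of_ne_of_ne (by grind) (by grind)
  · intro p _
    ext c <;> simp

/-- A facet obtained by removing the last face, in which coordinate `c` became nonzero, also lies in
the flag with the sign of `c` reversed; the two lie in the same hemisphere unless `c = k`. -/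
lemma sum_hemisphere_filter_ne (F : Multiset B → ZMod 2) (k : Fin N) :
    ∑ p ∈ hemisphere k with p.1 k ≠ k, F (p.labels label (range k)) = 0 := by
  let last (p : SignedFlag N) : Fin N := p.1.symm k
  refine Finset.sum_involution
    (fun p _ => (p.1, Function.update p.2 (last p) (!p.2 (last p)))) ?_ ?_ ?_ ?_
  · intro p _
    rw [SignedFlag.labels_congr label fun l hl => p.vertex_update _ (by simpa [last] using hl),
      CharTwo.add_self_eq_zero]
  · intro p _ _ heq
    have := congrArg (fun q : SignedFlag N => q.2 (last p)) heq
    simp at this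
  · intro p hp
    simp only [hemisphere, mem_filter, mem_sphere] at hp ⊢
    obtain ⟨⟨hp, hpk⟩, hne⟩ := hp
    have hlast : ∀ c, k ≤ c → c ≠ last p := by
      rintro c hc rfl
      have hk : p.1 (last p) = k := p.1.apply_symm_apply k
      rcases hc.eq_or_lt with heq | hlt
      · exact hne ((congrArg p.1 heq).trans hk)
      · exact hlt.ne (hk.symm.trans (hp _ hlt).1)
    refine ⟨⟨fun c hc => ⟨(hp c hc).1, ?_⟩, ?_⟩, hne⟩
    · rw [Function.update_of_ne (hlast c (Fin.le_def.2 (by omega))), (hp c hc).2]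
    · rw [Function.update_of_ne (hlast k le_rfl), hpk]
  · intro p _
    simp [last]

lemma hemisphere_filter_eq_sphere (k : Fin N) : {p ∈ hemisphere k | p.1 k = k} = sphere N k := by
  ext p
  simp only [hemisphere, mem_filter, mem_sphere]
  constructor
  · rintro ⟨⟨h, hsign⟩, hpos⟩ c hc
    rcases hc.eq_or_lt with hkc | hkc
    · obtain rfl : k = c := Fin.ext hkc
      exact ⟨hpos, hsign⟩
    · exact h c hkc
  · exact fun h => ⟨⟨fun c hc => h c (by omega), (h k le_rfl).2⟩, (h k le_rfl).1⟩

lemma sum_hemisphere_boundary (F : Multiset B → ZMod 2) (k : Fin N) :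
    ∑ p ∈ hemisphere k, ∑ j ∈ range (k + 1), F (p.labels label ((range (k + 1)).erase j)) =
      ∑ p ∈ sphere N k, F (p.labels label (range k)) := by
  rw [Finset.sum_comm, Finset.sum_range_succ, Finset.sum_eq_zero fun j hj =>
    sum_hemisphere_labels_erase label F k (mem_range.1 hj), zero_add, range_add_one,
    erase_insert notMem_range_self, ← Finset.sum_filter_add_sum_filter_not _ fun p => p.1 k = k,
    hemisphere_filter_eq_sphere, sum_hemisphere_filter_ne, add_zero]

lemma sum_sphere_eq_sum_hemisphere (G : SignedFlag N → ZMod 2) (k : Fin N) :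
    ∑ p ∈ sphere N (k + 1), G p = ∑ p ∈ hemisphere k, (G p + G (p.antipode (k + 1))) := by
  rw [← Finset.sum_filter_add_sum_filter_not _ fun p => p.2 k = true, Finset.sum_add_distrib]
  congr 1
  refine Finset.sum_nbij' (SignedFlag.antipode (k + 1)) (SignedFlag.antipode (k + 1)) ?_ ?_
    (fun p _ => p.antipode_antipode _) (fun p _ => p.antipode_antipode _)
    fun p _ => by rw [p.antipode_antipode]
  · intro p hp
    simp only [hemisphere, mem_filter, mem_sphere, SignedFlag.antipode] at hp ⊢
    refine ⟨fun c hc => ?_, by simpa using hp.2⟩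
    rw [if_neg (by omega)]
    exact hp.1 c hc
  · intro p hp
    simp only [hemisphere, mem_filter, mem_sphere, SignedFlag.antipode] at hp ⊢
    refine ⟨fun c hc => ?_, by simpa using hp.2⟩
    rw [if_neg (by omega)]
    exact hp.1 c hc

end Octahedron

section Tucker

variable {N : ℕ} {A : Type*}

/-- A labelling of the octahedral sphere by signed colors as in Tucker's lemma: antipodal points
carry opposite labels, and nested faces never do. -/
structure IsTuckerLabelling (color : (Fin N → Option Bool) → A)
    (sign : (Fin N → Option Bool) → Bool) : Prop where
  color_antipode : ∀ x, (∃ c, x c ≠ none) → color (antipode x) = color x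
  sign_antipode : ∀ x, (∃ c, x c ≠ none) → sign (antipode x) = !sign x
  sign_eq : ∀ x y, (∃ c, x c ≠ none) → IsFace x y → color x = color y → sign x = sign y

lemma IsTuckerLabelling.sign_vertex_eq {color : (Fin N → Option Bool) → A}
    {sign : (Fin N → Option Bool) → Bool} (h : IsTuckerLabelling color sign) (p : SignedFlag N)
    {i j : ℕ} (hi : i < N) (hj : j < N) (hij : color (p.vertex i) = color (p.vertex j)) :
    sign (p.vertex i) = sign (p.vertex j) := by
  rcases le_total i j with hle | hle
  · exact h.sign_eq _ _ (p.exists_vertex_ne_none hi) (p.isFace_vertex hle) hij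
  · exact (h.sign_eq _ _ (p.exists_vertex_ne_none hj) (p.isFace_vertex hle) hij.symm).symm

section KyFan

variable [LinearOrder A] (color : (Fin N → Option Bool) → A) (sign : (Fin N → Option Bool) → Bool)

/-- The color and sign of a point, ordered by color first. -/
def signedLabel (x : Fin N → Option Bool) : A ×ₗ Bool :=
  toLex (color x, sign x)

/-- The indicator, modulo `2`, of the flags whose first `k` faces carry labels that, when listed by
increasing color, alternate in sign and begin with `e`. -/
def SignedFlag.alternation (e : Bool) (k : ℕ) (p : SignedFlag N) : ZMod 2 :=
  altMultiset (fun a : A ×ₗ Bool => (ofLex a).2) e (p.labels (signedLabel color sign) (range k))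

/-- The faces of codimension one of a flag that alternate beginning with `+` are counted, modulo
`2`, by whether the flag itself alternates. -/
lemma sum_hemisphere_alternation (k : Fin N) :
    ∑ p ∈ hemisphere k,
        (p.alternation color sign true (k + 1) + p.alternation color sign false (k + 1)) =
      ∑ p ∈ sphere N k, p.alternation color sign true k := by
  simp only [SignedFlag.alternation]
  rw [← sum_hemisphere_boundary]
  refine Finset.sum_congr rfl fun p _ => ?_
  rw [← SignedFlag.sum_labels_erase, sum_altMultiset_erase, Bool.not_true]

namespace IsTuckerLabelling

variable {color sign}

lemma alternation_antipode (h : IsTuckerLabelling color sign) (e : Bool) {k : ℕ} (hk : k ≤ N)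
    {p : SignedFlag N} (hp : p ∈ sphere N k) :
    (p.antipode k).alternation color sign e k = p.alternation color sign (!e) k := by
  let neg (a : A ×ₗ Bool) : A ×ₗ Bool := toLex ((ofLex a).1, !(ofLex a).2)
  have hlabels : (p.antipode k).labels (signedLabel color sign) (range k) =
      (p.labels (signedLabel color sign) (range k)).map neg := by
    rw [SignedFlag.labels, SignedFlag.labels, Multiset.map_map]
    refine Multiset.map_congr rfl fun j hj => ?_
    have hjk : j < k := by simpa using hj
    have hx := p.exists_vertex_ne_none (hjk.trans_le hk)
    rw [SignedFlag.vertex_antipode hp hjk, signedLabel, h.color_antipode _ hx,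
      h.sign_antipode _ hx]
    rfl
  rw [SignedFlag.alternation, hlabels,
    altMultiset_map (fun a : A ×ₗ Bool => (ofLex a).2) ?_ fun _ => rfl, SignedFlag.alternation]
  simp only [SignedFlag.labels, Multiset.mem_map, forall_exists_index, and_imp,
    forall_apply_eq_imp_iff₂, Finset.mem_val, mem_range]
  intro i hi j hj
  simp only [Prod.Lex.le_iff, neg, signedLabel, ofLex_toLex]
  refine or_congr_right (and_congr_right fun hij => ?_)
  simp [h.sign_vertex_eq p (hi.trans_le hk) (hj.trans_le hk) hij]

/-- Ky Fan's parity theorem. By antipodality the sum over a sphere is that over a hemisphere of the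
alternations of both kinds, which is the sum over the boundary of the hemisphere, the sphere of
one dimension less. -/
theorem sum_alternation (h : IsTuckerLabelling color sign) {k : ℕ} (hk : k ≤ N) :
    ∑ p ∈ sphere N k, p.alternation color sign true k = 1 := by
  induction k with
  | zero =>
    have : sphere N 0 = {(Equiv.refl _, fun _ => true)} := by
      ext p
      simp [mem_sphere, Prod.ext_iff, Equiv.ext_iff, funext_iff, forall_and]
    simp [this, SignedFlag.alternation, SignedFlag.labels, altMultiset_zero]
  | succ k ih =>
    rw [sum_sphere_eq_sum_hemisphere _ ⟨k, hk⟩, ← ih (by omega),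
      ← sum_hemisphere_alternation color sign ⟨k, hk⟩]
    refine Finset.sum_congr rfl fun p hp => ?_
    rw [h.alternation_antipode true hk (mem_filter.1 hp).1, Bool.not_true]

theorem exists_flag_injOn_color (h : IsTuckerLabelling color sign) :
    ∃ p : SignedFlag N, Set.InjOn (fun j => color (p.vertex j)) (range N) := by
  obtain ⟨p, -, hp⟩ := Finset.exists_ne_zero_of_sum_ne_zero
    ((h.sum_alternation le_rfl).trans_ne one_ne_zero)
  refine ⟨p, fun i hi j hj hij => ?_⟩
  refine Multiset.inj_on_of_nodup_map (nodup_of_altMultiset_ne_zero _ hp) i hi j hj ?_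
  have hsign := h.sign_vertex_eq p (mem_range.1 hi) (mem_range.1 hj) hij
  exact congrArg toLex (Prod.ext hij hsign)

end IsTuckerLabelling

end KyFan

section Covering

variable {S : Set A} {R : (Fin N → Option Bool) → A → Bool → Prop}

/-- The color of `x` is a choice among the `a` with `R x a s` for some `s`; this condition is the
same at antipodal points, hence so is the choice. -/
lemma exists_isTuckerLabelling [Nonempty A]
    (hanti : ∀ x a s, R x a s → R (antipode x) a (!s))
    (hface : ∀ x y a s, IsFace x y → R x a s → ¬ R y a (!s))
    (hcover : ∀ x, (∃ c, x c ≠ none) → ∃ a ∈ S, ∃ s, R x a s) :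
    ∃ color sign, IsTuckerLabelling (N := N) color sign ∧
      ∀ x, (∃ c, x c ≠ none) → color x ∈ S := by
  classical
  let color (x : Fin N → Option Bool) : A := Classical.epsilon fun a => a ∈ S ∧ ∃ s, R x a s
  let sign (x : Fin N → Option Bool) : Bool := decide (R x (color x) true)
  have hcolor : ∀ x, (∃ c, x c ≠ none) → color x ∈ S ∧ ∃ s, R x (color x) s :=
    fun x hx => Classical.epsilon_spec (hcover x hx)
  have hsign : ∀ x s, R x (color x) s → sign x = s := by
    rintro x (_ | _) hs
    · exact decide_eq_false fun htrue => hface x x _ _ (fun _ _ h => h) hs htrue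
    · exact decide_eq_true hs
  have hcolor_antipode : ∀ x, color (antipode x) = color x := fun x =>
    congrArg Classical.epsilon <| funext fun a => propext <| and_congr_right fun _ =>
      ⟨fun ⟨s, hs⟩ => ⟨!s, by simpa only [antipode_antipode] using hanti _ _ _ hs⟩,
        fun ⟨s, hs⟩ => ⟨!s, hanti _ _ _ hs⟩⟩
  refine ⟨color, sign, ⟨fun x _ => hcolor_antipode x, fun x hx => ?_, fun x y hx hxy hcol => ?_⟩,
    fun x hx => (hcolor x hx).1⟩
  · obtain ⟨-, s, hs⟩ := hcolor x hx
    rw [hsign x s hs]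
    exact hsign _ _ ((hcolor_antipode x).symm ▸ hanti _ _ _ hs)
  · obtain ⟨-, s, hs⟩ := hcolor x hx
    obtain ⟨c, hc⟩ := hx
    obtain ⟨b, hb⟩ := Option.ne_none_iff_exists'.1 hc
    obtain ⟨-, t, ht⟩ := hcolor y ⟨c, by simp [hxy c b hb]⟩
    rw [hsign x s hs, hsign y t ht]
    by_contra hst
    exact hface x y _ s hxy hs (by rwa [hcol, ← Bool.eq_not.2 (Ne.symm hst)])

theorem octahedral_tucker (S : Finset A)
    (hanti : ∀ x a s, R x a s → R (antipode x) a (!s))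
    (hface : ∀ x y a s, IsFace x y → R x a s → ¬ R y a (!s)) (hS : #S < N) :
    ∃ x, (∃ c, x c ≠ none) ∧ ∀ a ∈ S, ∀ s, ¬ R x a s := by
  classical
  by_contra! hcover
  obtain ⟨a₀, -⟩ := hcover (fun _ => some true) ⟨⟨0, by omega⟩, by simp⟩
  have : Nonempty A := ⟨a₀⟩
  let _ : LinearOrder A := linearOrderOfSTO WellOrderingRel
  obtain ⟨color, sign, hlabel, hcolor⟩ := exists_isTuckerLabelling (S := S) hanti hface hcover
  obtain ⟨p, hp⟩ := hlabel.exists_flag_injOn_color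
  have hcard := Finset.card_le_card_of_injOn _
    (fun j hj => hcolor _ (p.exists_vertex_ne_none (mem_range.1 hj))) hp
  rw [card_range] at hcard
  omega

end Covering

end Tucker

section DiscreteHalving

/-- The number of changes of value of `a` along `0, 1, …, N`. -/
def cutCount (a : ℕ → Bool) (N : ℕ) : ℕ :=
  #{j ∈ range N | a (j + 1) ≠ a j}

/-- The number of matches between `y` and the alternating pattern that starts with `e` and advances
to the opposite sign at each coordinate of `y` that does not match it. Thus the pattern changes
sign once per mismatch, and many matches mean few changes. -/
def matchCount : {N : ℕ} → Bool → (Fin N → Option Bool) → ℕ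
  | 0, _, _ => 0
  | _ + 1, e, y =>
    if y 0 = some e then matchCount e (Fin.tail y) + 1 else matchCount (!e) (Fin.tail y)

lemma matchCount_not_antipode {N : ℕ} (e : Bool) (y : Fin N → Option Bool) :
    matchCount (!e) (antipode y) = matchCount e y := by
  induction N generalizing e with
  | zero => rfl
  | succ N ih =>
    have htail : Fin.tail (antipode y) = antipode (Fin.tail y) := rfl
    simp only [matchCount, antipode_eq_some, htail, Bool.not_not, ih, ← ih (!e)]

lemma matchCount_le_not_add_one {N : ℕ} (e : Bool) (y : Fin N → Option Bool) :
    matchCount e y ≤ matchCount (!e) y + 1 := by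
  induction N generalizing e with
  | zero => exact Nat.zero_le _
  | succ N ih =>
    have := ih (!e) (Fin.tail y)
    rcases h : y 0 with _ | b
    · simpa [matchCount, h] using this
    · rcases Bool.eq_or_eq_not b e with rfl | rfl
      · simp [matchCount, h]
      · simp only [matchCount, h, Option.some.injEq, Bool.not_eq_self, if_false, if_true]
        omega

lemma matchCount_true_ne_false {N : ℕ} {y : Fin N → Option Bool} (hy : ∃ c, y c ≠ none) :
    matchCount true y ≠ matchCount false y := by
  induction N with
  | zero => exact hy.choose.elim0
  | succ N ih =>
    rcases h : y 0 with _ | _ | _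
    · obtain ⟨c, hc⟩ := hy
      obtain ⟨c, rfl⟩ := Fin.exists_succ_eq.2 fun h0 : c = 0 => hc (h0 ▸ h)
      simpa [matchCount, h] using (ih ⟨c, hc⟩).symm
    · simp [matchCount, h]
    · simp [matchCount, h]

lemma matchCount_mono {N : ℕ} (e : Bool) {x y : Fin N → Option Bool} (hxy : IsFace x y) :
    matchCount e x ≤ matchCount e y := by
  induction N generalizing e with
  | zero => rfl
  | succ N ih =>
    have htail : IsFace (Fin.tail x) (Fin.tail y) := fun c => hxy c.succ
    simp only [matchCount]
    split_ifs with hx hy hy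
    · exact Nat.succ_le_succ (ih e htail)
    · exact absurd (hxy 0 e hx) hy
    · calc matchCount (!e) (Fin.tail x) ≤ matchCount e (Fin.tail x) + 1 := by
            simpa using matchCount_le_not_add_one (!e) (Fin.tail x)
        _ ≤ matchCount e (Fin.tail y) + 1 := Nat.succ_le_succ (ih e htail)
    · exact ih (!e) htail

lemma exists_pattern_card_mismatch {N : ℕ} (e : Bool) (y : Fin N → Option Bool) :
    ∃ b : ℕ → Bool, b 0 = e ∧ #{j | y j ≠ some (b j)} + matchCount e y = N ∧
      ∀ j, y j = some (b j) → b (j + 1) = b j := by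
  induction N generalizing e with
  | zero => exact ⟨fun _ => e, rfl, rfl, fun j => j.elim0⟩
  | succ N ih =>
    obtain ⟨b, hb0, hcard, hb⟩ := ih (if y 0 = some e then e else !e) (Fin.tail y)
    let b' (j : ℕ) : Bool := Nat.casesOn j e b
    have hcount : #{j : Fin (N + 1) | y j ≠ some (b' j)} =
        if y 0 ≠ some e then #{j : Fin N | Fin.tail y j ≠ some (b j)} + 1
        else #{j : Fin N | Fin.tail y j ≠ some (b j)} := Fin.card_filter_univ_succ _
    refine ⟨b', rfl, ?_, Fin.cases (fun h => ?_) fun j h => hb j h⟩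
    · rw [hcount, matchCount]
      by_cases h : y 0 = some e <;> simp only [h, ne_eq, not_true, not_false_iff, if_true, if_false]
        at hcard ⊢ <;> omega
    · have h : y 0 = some e := h
      rwa [if_pos h] at hb0

lemma cutCount_eq_card_fin (a : ℕ → Bool) (N : ℕ) :
    cutCount a N = #{j : Fin N | a (j + 1) ≠ a j} := by
  rw [cutCount, Finset.card_filter, Finset.card_filter,
    Fin.sum_univ_eq_sum_range fun j => if a (j + 1) ≠ a j then 1 else 0]

lemma exists_pattern_cutCount_le {N : ℕ} (e : Bool) (y : Fin N → Option Bool) :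
    ∃ b : ℕ → Bool, cutCount b N ≤ #{j : Fin N | y j ≠ some (b j)} ∧
      #{j : Fin N | y j ≠ some (b j)} + matchCount e y = N := by
  obtain ⟨b, -, hcard, hb⟩ := exists_pattern_card_mismatch e y
  refine ⟨b, ?_, hcard⟩
  rw [cutCount_eq_card_fin]
  exact Finset.card_le_card (Finset.monotone_filter_right _ fun j _ => mt (hb j))

section ColorWeight

variable {N : ℕ} {w : ℕ → ℝ}

/-- The total weight of the coordinates at which `y` has the sign `e`. -/
def colorWeight (w : ℕ → ℝ) (y : Fin N → Option Bool) (e : Bool) : ℝ :=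
  ∑ j with y j = some e, w j

lemma colorWeight_antipode_not (y : Fin N → Option Bool) (e : Bool) :
    colorWeight w (antipode y) (!e) = colorWeight w y e := by
  simp only [colorWeight, antipode_eq_some, Bool.not_not]

lemma colorWeight_mono (hw : ∀ j, 0 ≤ w j) {x y : Fin N → Option Bool} (hxy : IsFace x y)
    (e : Bool) : colorWeight w x e ≤ colorWeight w y e :=
  Finset.sum_le_sum_of_subset_of_nonneg (Finset.monotone_filter_right _ fun j _ => hxy j e)
    fun j _ _ => hw j

lemma colorWeight_add_not_le (hw : ∀ j, 0 ≤ w j) (y : Fin N → Option Bool) (e : Bool) :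
    colorWeight w y e + colorWeight w y (!e) ≤ ∑ j ∈ range N, w j := by
  rw [colorWeight, colorWeight, ← Finset.sum_union (Finset.disjoint_filter.2 (by simp +contextual)),
    ← Fin.sum_univ_eq_sum_range]
  exact Finset.sum_le_univ_sum_of_nonneg fun j => hw j

lemma sum_pattern_le_colorWeight {δ : ℝ} (hw : ∀ j, 0 ≤ w j) (hδ : ∀ j, w j ≤ δ)
    (y : Fin N → Option Bool) (b : ℕ → Bool) (e : Bool) :
    ∑ j ∈ range N with b j = e, w j ≤
      colorWeight w y e + #{j : Fin N | y j ≠ some (b j)} * δ := by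
  have hmismatch : ∑ j with y j ≠ some (b j), w j ≤ #{j : Fin N | y j ≠ some (b j)} * δ := by
    simpa using Finset.sum_le_card_nsmul _ (fun j : Fin N => w j) δ fun j _ => hδ j
  refine le_trans ?_ (add_le_add_right hmismatch _)
  simp only [colorWeight, Finset.sum_filter, ← Finset.sum_add_distrib]
  rw [← Fin.sum_univ_eq_sum_range fun j => if b j = e then w j else 0]
  refine Finset.sum_le_sum fun j _ => ?_
  have := hw j
  split_ifs <;> simp_all

end ColorWeight

/-- Tucker's lemma is applied with two kinds of colors: an agent `i`, when more than half of its
weight has the sign `s`, and a number `k`, when `k` is the larger of the two values of `matchCount`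
and is the one that starts with `s`. At a point without a color no sign carries more than half for
anyone, and all but `card ι` coordinates match an alternating pattern. -/
theorem exists_halving_pattern {ι : Type*} [Fintype ι] {N : ℕ} (hN : Fintype.card ι < N)
    {w : ι → ℕ → ℝ} {δ : ℝ} (hw : ∀ i j, 0 ≤ w i j) (hδ : ∀ i j, w i j ≤ δ) :
    ∃ b : ℕ → Bool, cutCount b N ≤ Fintype.card ι ∧ ∀ i e,
      ∑ j ∈ range N with b j = e, w i j ≤ (∑ j ∈ range N, w i j) / 2 + Fintype.card ι * δ := by
  let R (x : Fin N → Option Bool) (a : ι ⊕ ℕ) (s : Bool) : Prop :=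
    a.elim (fun i => ∑ j ∈ range N, w i j < 2 * colorWeight (w i) x s)
      fun k => matchCount s x = k ∧ matchCount (!s) x < k
  have hanti : ∀ x a s, R x a s → R (antipode x) a (!s) := by
    rintro x (i | k) s h
    · simpa only [R, Sum.elim_inl, colorWeight_antipode_not] using h
    · simpa only [R, Sum.elim_inr, matchCount_not_antipode] using h
  have hface : ∀ x y a s, IsFace x y → R x a s → ¬ R y a (!s) := by
    rintro x y (i | k) s hxy hx hy
    · simp only [R, Sum.elim_inl] at hx hy
      linarith [colorWeight_mono (hw i) hxy s, colorWeight_add_not_le (hw i) y s]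
    · simp only [R, Sum.elim_inr, Bool.not_not] at hx hy
      have := matchCount_mono s hxy
      omega
  obtain ⟨x, hx, hxR⟩ := octahedral_tucker
    (Finset.univ.disjSum (Finset.Ico 1 (N - Fintype.card ι))) hanti hface
    (by rw [Finset.card_disjSum, card_univ, Nat.card_Ico]; omega)
  have hlight : ∀ i e, colorWeight (w i) x e ≤ (∑ j ∈ range N, w i j) / 2 := fun i e => by
    have := hxR (.inl i) (by simp) e
    simp only [R, Sum.elim_inl, not_lt] at this
    linarith
  obtain ⟨s, hs⟩ : ∃ s, matchCount (!s) x < matchCount s x := by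
    rcases (matchCount_true_ne_false hx).lt_or_gt with h | h
    exacts [⟨false, h⟩, ⟨true, h⟩]
  have hmatch : N ≤ matchCount s x + Fintype.card ι := by
    by_contra! h
    exact hxR (.inr (matchCount s x)) (by simp; omega) s ⟨rfl, hs⟩
  obtain ⟨b, hcut, hmis⟩ := exists_pattern_cutCount_le s x
  refine ⟨b, by omega, fun i e => (sum_pattern_le_colorWeight (hw i) (hδ i) x b e).trans ?_⟩
  have hδ0 : 0 ≤ δ := (hw i 0).trans (hδ i 0)
  gcongr
  · exact hlight i e
  · omega

end DiscreteHalving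

section DiscreteShares

lemma cutCount_not (a : ℕ → Bool) (N : ℕ) : cutCount (fun j => !a j) N = cutCount a N := by
  simp only [cutCount, ne_eq, Bool.not_inj_iff]

lemma cutCount_and_beq_true_add_false_le (a b : ℕ → Bool) (N : ℕ) :
    cutCount (fun j => a j && b j == true) N + cutCount (fun j => a j && b j == false) N ≤
      cutCount a N + 2 * cutCount b N := by
  simp only [cutCount, Finset.card_filter, Finset.mul_sum, ← Finset.sum_add_distrib]
  refine Finset.sum_le_sum fun j _ => ?_
  cases a j <;> cases a (j + 1) <;> cases b j <;> cases b (j + 1) <;> simp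

lemma sum_filter_and_beq_true_add_false (a b : ℕ → Bool) (s : Finset ℕ) (w : ℕ → ℝ) :
    ∑ j ∈ s with a j && b j == true, w j + ∑ j ∈ s with a j && b j == false, w j =
      ∑ j ∈ s with a j, w j := by
  simp only [Finset.sum_filter, ← Finset.sum_add_distrib]
  refine Finset.sum_congr rfl fun j _ => ?_
  cases a j <;> cases b j <;> simp

variable {ι : Type*} [Fintype ι] {N : ℕ} {w : ι → ℕ → ℝ} {δ : ℝ}

lemma exists_half_of_cutCount_lt (hN : Fintype.card ι < N) (hw : ∀ i j, 0 ≤ w i j)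
    (hδ : ∀ i j, w i j ≤ δ) {a : ℕ → Bool} (ha : cutCount a N < 2 * Fintype.card ι) :
    ∃ a' : ℕ → Bool, cutCount a' N < 2 * Fintype.card ι ∧ ∀ i,
      |∑ j ∈ range N with a' j, w i j - (∑ j ∈ range N with a j, w i j) / 2| ≤
        Fintype.card ι * δ := by
  obtain ⟨b, hcut, hb⟩ := exists_halving_pattern hN (w := fun i j => if a j then w i j else 0)
    (fun i j => ite_nonneg (hw i j) le_rfl)
    fun i j => (ite_le_sup _ _ _).trans (sup_le (hδ i j) ((hw i j).trans (hδ i j)))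
  have hle : ∀ i e, ∑ j ∈ range N with a j && b j == e, w i j ≤
      (∑ j ∈ range N with a j, w i j) / 2 + Fintype.card ι * δ := fun i e => by
    convert hb i e using 1
    · simp only [Finset.sum_filter, ← ite_and, and_comm, Bool.and_eq_true, beq_iff_eq]
    · simp only [Finset.sum_filter]
  obtain ⟨e, he⟩ : ∃ e, cutCount (fun j => a j && b j == e) N < 2 * Fintype.card ι := by
    by_contra! h
    have := cutCount_and_beq_true_add_false_le a b N
    have := h true
    have := h false
    omega
  refine ⟨_, he, fun i => abs_le.2 ⟨?_, by linarith [hle i e]⟩⟩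
  have := sum_filter_and_beq_true_add_false a b (range N) (w i)
  cases e
  · linarith [hle i true]
  · linarith [hle i false]

/-- The share `α` is reached by binary expansion: halving a share of `2 α`, or complementing a share
of `1 - α` when `α > 1 / 2`. -/
theorem exists_pattern_share [Nonempty ι] (hN : Fintype.card ι < N) (hw : ∀ i j, 0 ≤ w i j)
    (hδ : ∀ i j, w i j ≤ δ) (d : ℕ) {α : ℝ} (hα : α ∈ Set.Icc (0 : ℝ) 1) :
    ∃ a : ℕ → Bool, cutCount a N < 2 * Fintype.card ι ∧ ∀ i,
      |∑ j ∈ range N with a j, w i j - α * ∑ j ∈ range N, w i j| ≤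
        (∑ j ∈ range N, w i j) / 2 ^ d + 2 * (Fintype.card ι * δ) := by
  have hW : ∀ i, 0 ≤ ∑ j ∈ range N, w i j := fun i => Finset.sum_nonneg fun j _ => hw i j
  obtain ⟨i₀⟩ := ‹Nonempty ι›
  have hδ0 : 0 ≤ Fintype.card ι * δ := mul_nonneg (Nat.cast_nonneg _) ((hw i₀ 0).trans (hδ i₀ 0))
  induction d generalizing α with
  | zero =>
    refine ⟨fun _ => true, by simp [cutCount, Fintype.card_pos_iff, Nonempty.intro i₀], fun i => ?_⟩
    simp only [Finset.filter_true, pow_zero, div_one, abs_le]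
    constructor <;> nlinarith [hW i, hα.1, hα.2]
  | succ d ih =>
    wlog hhalf : α ≤ 1 / 2 generalizing α
    · obtain ⟨a, ha, hshare⟩ := this (α := 1 - α) ⟨by linarith [hα.2], by linarith [hα.1]⟩
        (by linarith)
      refine ⟨fun j => !a j, by rwa [cutCount_not], fun i => ?_⟩
      have hcompl := Finset.sum_filter_add_sum_filter_not (range N) (fun j => a j = true) (w i)
      simp only [Bool.not_eq_true', ← Bool.not_eq_true]
      rw [abs_sub_comm]
      convert hshare i using 2
      linarith
    · obtain ⟨a, ha, hshare⟩ := ih (α := 2 * α) ⟨by linarith [hα.1], by linarith⟩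
      obtain ⟨a', ha', hclose⟩ := exists_half_of_cutCount_lt hN hw hδ ha
      refine ⟨a', ha', fun i => ?_⟩
      have h1 := abs_le.1 (hshare i)
      have h2 := abs_le.1 (hclose i)
      rw [pow_succ, ← div_div, abs_le]
      constructor <;> linarith

end DiscreteShares

section Blocks

/-- The index of the maximal constant block of `a` that contains `j`, shifted by one when `a`
starts with `true`, so that the blocks on which `a` is `true` are those of odd index. -/
def blockIndex (a : ℕ → Bool) (j : ℕ) : ℕ :=
  (a 0).toNat + cutCount a j

lemma blockIndex_succ (a : ℕ → Bool) (j : ℕ) :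
    blockIndex a (j + 1) = blockIndex a j + if a (j + 1) ≠ a j then 1 else 0 := by
  simp only [blockIndex, cutCount, Finset.card_filter, Finset.sum_range_succ, add_assoc]

lemma blockIndex_monotone (a : ℕ → Bool) : Monotone (blockIndex a) :=
  monotone_nat_of_le_succ fun j => by rw [blockIndex_succ]; exact Nat.le_add_right _ _

lemma odd_blockIndex (a : ℕ → Bool) (j : ℕ) : Odd (blockIndex a j) ↔ a j = true := by
  induction j with
  | zero => cases h : a 0 <;> simp [blockIndex, cutCount, h]
  | succ j ih =>
    rw [blockIndex_succ]
    split_ifs with h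
    · rw [Nat.odd_add_one, ih, Bool.eq_not.2 h]
      simp
    · rw [add_zero, ih, not_not.1 h]

lemma exists_forall_lt_iff_of_monotone {f : ℕ → ℕ} (hf : Monotone f) (N r : ℕ) :
    ∃ m, ∀ j, j < m ↔ j < N ∧ f j ≤ r := by
  have hex : ∃ j, ¬ (j < N ∧ f j ≤ r) := ⟨N, by simp⟩
  exact ⟨Nat.find hex, fun j => ⟨fun hj => not_not.1 (Nat.find_min hex hj), fun hj =>
    not_le.1 fun hle => Nat.find_spec hex ⟨hle.trans_lt hj.1, (hf hle).trans hj.2⟩⟩⟩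

theorem exists_monotone_sum_filter_sub_eq {n N : ℕ} {a : ℕ → Bool} (ha : cutCount a N < 2 * n) :
    ∃ t : ℕ → ℕ, Monotone t ∧ ∀ {M : Type*} [AddCommGroup M] (g : ℕ → M),
      ∑ j ∈ range N with a j, (g (j + 1) - g j) =
        ∑ r ∈ range n, (g (t (2 * r + 1)) - g (t (2 * r))) := by
  choose t ht using exists_forall_lt_iff_of_monotone (blockIndex_monotone a) N
  have ht_mono : Monotone t := fun r r' h => le_of_not_gt fun hlt =>
    absurd ((ht r' _).2 ⟨((ht r _).1 hlt).1, ((ht r _).1 hlt).2.trans h⟩) (lt_irrefl _)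
  refine ⟨t, ht_mono, fun {M} _ g => ?_⟩
  have hmaps : ∀ j ∈ {j ∈ range N | a j}, blockIndex a j / 2 ∈ range n := fun j hj => by
    have hjN : j ≤ N := (mem_range.1 (mem_filter.1 hj).1).le
    have : blockIndex a j ≤ blockIndex a N := blockIndex_monotone a hjN
    have := (a 0).toNat_le
    have := Nat.odd_iff.1 ((odd_blockIndex a j).2 (mem_filter.1 hj).2)
    simp only [blockIndex] at *
    simp only [mem_range]
    omega
  rw [← Finset.sum_fiberwise_of_maps_to hmaps]
  refine Finset.sum_congr rfl fun r _ => ?_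
  have hblock : {j ∈ {j ∈ range N | a j} | blockIndex a j / 2 = r} =
      Ico (t (2 * r)) (t (2 * r + 1)) := by
    ext j
    simp only [mem_filter, mem_range, mem_Ico, ← not_lt, ht, ← odd_blockIndex, Nat.odd_iff]
    omega
  rw [hblock, Finset.sum_Ico_sub _ (ht_mono (Nat.le_succ _))]

end Blocks

section ContinuousCake

variable {ι : Type*} {G : ι → ℝ → ℝ} {c d : ℝ}

lemma exists_fine_grid [Finite ι] (hG : ∀ i, Continuous (G i)) (hcd : c ≤ d) {δ : ℝ}
    (hδ : 0 < δ) (m : ℕ) :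
    ∃ N, m < N ∧ ∃ s : ℕ → Set.Icc c d, Monotone s ∧ (s 0 : ℝ) = c ∧ (s N : ℝ) = d ∧
      ∀ i j, G i (s (j + 1)) - G i (s j) ≤ δ := by
  obtain ⟨s, hs0, hs, ⟨N, hN⟩, hcover⟩ := exists_monotone_Icc_subset_open_cover_Icc hcd
    (c := fun y : Set.Icc c d => {z | ∀ i, |G i z - G i y| < δ / 2})
    (fun y => by
      simp only [Set.ofPred_forall]
      exact isOpen_iInter_of_finite fun i => isOpen_lt
        (((hG i).comp continuous_subtype_val).sub continuous_const).abs continuous_const)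
    fun z _ => Set.mem_iUnion.2 ⟨z, by simpa using fun _ => half_pos hδ⟩
  refine ⟨max N (m + 1), by omega, s, hs, hs0, hN _ (le_max_left _ _), fun i j => ?_⟩
  obtain ⟨y, hy⟩ := hcover j
  have h0 := abs_lt.1 (hy ⟨le_rfl, hs j.le_succ⟩ i)
  have h1 := abs_lt.1 (hy ⟨hs j.le_succ, le_rfl⟩ i)
  linarith

variable [Fintype ι] [Nonempty ι]

lemma exists_monotone_share_approx (hG : ∀ i, Continuous (G i))
    (hmono : ∀ i, Monotone (G i)) (hcd : c ≤ d) {α : ℝ} (hα : α ∈ Set.Icc (0 : ℝ) 1) {ε : ℝ}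
    (hε : 0 < ε) :
    ∃ t : ℕ → Set.Icc c d, Monotone t ∧ ∀ i,
      |∑ r ∈ range (Fintype.card ι), (G i (t (2 * r + 1)) - G i (t (2 * r))) -
        α * (G i d - G i c)| < ε := by
  obtain ⟨N, hN, s, hs, hs0, hsN, hstep⟩ := exists_fine_grid hG hcd
    (δ := ε / (4 * Fintype.card ι)) (by positivity) (Fintype.card ι)
  obtain ⟨k, hk⟩ : ∃ k : ℕ, ∀ i, (G i d - G i c) / 2 ^ k < ε / 2 :=
    (Filter.eventually_all.2 fun i => (tendsto_const_nhds.div_atTop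
      (tendsto_pow_atTop_atTop_of_one_lt one_lt_two)).eventually_lt_const (half_pos hε)).exists
  obtain ⟨a, ha, hshare⟩ := exists_pattern_share hN
    (w := fun i j => G i (s (j + 1)) - G i (s j))
    (fun i j => sub_nonneg.2 (hmono i (hs j.le_succ))) hstep k hα
  obtain ⟨t, ht, hsum⟩ := exists_monotone_sum_filter_sub_eq ha
  refine ⟨s ∘ t, hs.comp ht, fun i => ?_⟩
  have hi := hshare i
  rw [hsum fun j => G i (s j), Finset.sum_range_sub fun j => G i (s j), hs0, hsN] at hi
  have hδ : 2 * (Fintype.card ι * (ε / (4 * Fintype.card ι))) = ε / 2 := by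
    field_simp
    norm_num
  exact hi.trans_lt (by linarith [hk i])

theorem exists_monotone_share (hG : ∀ i, Continuous (G i))
    (hmono : ∀ i, Monotone (G i)) (hcd : c ≤ d) {α : ℝ} (hα : α ∈ Set.Icc (0 : ℝ) 1) :
    ∃ t : ℕ → Set.Icc c d, Monotone t ∧ ∀ i,
      ∑ r ∈ range (Fintype.card ι), (G i (t (2 * r + 1)) - G i (t (2 * r))) =
        α * (G i d - G i c) := by
  let share (t : ℕ → Set.Icc c d) (i : ι) : ℝ :=
    ∑ r ∈ range (Fintype.card ι), (G i (t (2 * r + 1)) - G i (t (2 * r)))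
  have hshare : Continuous share := by fun_prop
  have hclosed : IsClosed (share '' {t | Monotone t}) :=
    (isClosed_monotone.isCompact.image hshare).isClosed
  obtain ⟨t, ht, hts⟩ : (fun i => α * (G i d - G i c)) ∈ share '' {t | Monotone t} := by
    refine hclosed.closure_subset (Metric.mem_closure_iff.2 fun ε hε => ?_)
    obtain ⟨t, ht, hclose⟩ := exists_monotone_share_approx hG hmono hcd hα hε
    refine ⟨_, ⟨t, ht, rfl⟩, ?_⟩
    rw [dist_comm, dist_pi_lt_iff hε]
    exact hclose
  exact ⟨t, ht, fun i => congrFun hts i⟩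

end ContinuousCake

section Measures

lemma measureReal_iUnion_Icc_of_monotone {μ : Measure ℝ} [IsLocallyFiniteMeasure μ]
    [NullSingletonClass μ] {t : ℕ → ℝ} (ht : Monotone t) (n : ℕ) :
    μ.real (⋃ j : Fin n, Set.Icc (t (2 * j)) (t (2 * j + 1))) =
      ∑ r ∈ range n, μ.real (Set.Icc (t (2 * r)) (t (2 * r + 1))) := by
  have hdisj : Pairwise (Function.onFun Disjoint
      fun j : Fin n => Set.Ioc (t (2 * j)) (t (2 * j + 1))) := fun i j hij =>
    ht.pairwise_disjoint_on_Ioc_succ (by simpa [Fin.val_inj] using hij)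
  rw [← measureReal_congr (Filter.EventuallyEq.countable_iUnion fun j : Fin n => Ioc_ae_eq_Icc),
    measureReal_iUnion_fintype hdisj (fun _ => measurableSet_Ioc)
      fun _ => measure_Ioc_lt_top.ne,
    Fin.sum_univ_eq_sum_range fun r => μ.real (Set.Ioc (t (2 * r)) (t (2 * r + 1)))]
  exact Finset.sum_congr rfl fun r _ => measureReal_congr Ioc_ae_eq_Icc

theorem stromquist_woodall_general {ι : Type*} [Fintype ι] (μ : ι → Measure ℝ)
    [∀ i, IsLocallyFiniteMeasure (μ i)] [∀ i, NullSingletonClass (μ i)] {c d : ℝ} (hcd : c ≤ d)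
    {α : ℝ} (hα : α ∈ Set.Icc (0 : ℝ) 1) :
    ∃ a b : Fin (Fintype.card ι) → ℝ, (⋃ j, Set.Icc (a j) (b j)) ⊆ Set.Icc c d ∧
      ∀ i, (μ i).real (⋃ j, Set.Icc (a j) (b j)) = α * (μ i).real (Set.Icc c d) := by
  cases isEmpty_or_nonempty ι
  · exact ⟨fun _ => c, fun _ => c, Set.iUnion_subset fun _ => Set.Icc_subset_Icc_right hcd,
      isEmptyElim⟩
  let G (i : ι) (x : ℝ) : ℝ := ∫ _ in c..x, (1 : ℝ) ∂(μ i)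
  have hG_sub : ∀ i x y, x ≤ y → G i y - G i x = (μ i).real (Set.Icc x y) := fun i x y hxy => by
    rw [intervalIntegral.integral_interval_sub_left (by simp) (by simp),
      intervalIntegral.integral_of_le hxy, setIntegral_const, smul_eq_mul, mul_one,
      measureReal_congr Ioc_ae_eq_Icc]
  have hG_cont : ∀ i, Continuous (G i) := fun i =>
    intervalIntegral.continuous_primitive (fun _ _ => by simp) c
  have hG_mono : ∀ i, Monotone (G i) := fun i x y hxy =>
    sub_nonneg.1 ((hG_sub i x y hxy).symm ▸ measureReal_nonneg)
  obtain ⟨t, ht, hshare⟩ := exists_monotone_share hG_cont hG_mono hcd hα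
  refine ⟨fun j => t (2 * j), fun j => t (2 * j + 1),
    Set.iUnion_subset fun j => Set.Icc_subset_Icc (t _).2.1 (t _).2.2, fun i => ?_⟩
  rw [measureReal_iUnion_Icc_of_monotone (t := fun j => t j) (fun _ _ h => ht h),
    ← hG_sub i c d hcd, ← hshare i]
  exact Finset.sum_congr rfl fun r _ => (hG_sub i _ _ (ht (Nat.le_succ _))).symm

lemma exists_measureReal_eq_setIntegral {f : ℝ → ℝ} {K : Set ℝ}
    (hf : ∀ x, 0 ≤ f x) (hint : IntegrableOn f K) :
    ∃ μ : Measure ℝ, IsFiniteMeasure μ ∧ NullSingletonClass μ ∧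
      ∀ s ⊆ K, MeasurableSet s → μ.real s = ∫ x in s, f x := by
  refine ⟨(volume.restrict K).withDensity fun x => ENNReal.ofReal (f x),
    isFiniteMeasure_withDensity_ofReal hint.2, ⟨fun x => ?_⟩, fun s hs hsm => ?_⟩
  · exact withDensity_absolutelyContinuous _ _ (measure_singleton x)
  · rw [Measure.real, withDensity_apply _ hsm, Measure.restrict_restrict hsm,
      Set.inter_eq_left.2 hs, integral_eq_lintegral_of_nonneg_ae (.of_forall hf)
        (hint.mono_set hs).1]

end Measures

/-- Stromquist–Woodall: Let `n ≥ 2` agents have normalized nonnegative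
integrable densities over the cake `[0,1]`. For every `α ∈ [0,1]` there is a subset of
`[0,1]` that is a union of at most `n` intervals and is valued exactly `α` by every agent. -/
theorem stromquist_woodall
    (n : ℕ) (hn : 2 ≤ n)
    (f : Fin n → ℝ → ℝ)
    (hf_nonneg : ∀ i x, 0 ≤ f i x)
    (hf_int : ∀ i, IntegrableOn (f i) (Set.Icc (0 : ℝ) 1))
    (hf_norm : ∀ i, (∫ x in Set.Icc (0 : ℝ) 1, f i x) = 1)
    (α : ℝ) (hα : α ∈ Set.Icc (0 : ℝ) 1) :
    ∃ (k : ℕ) (a b : Fin k → ℝ),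
      k ≤ n ∧
      (⋃ j, Set.Icc (a j) (b j)) ⊆ Set.Icc (0 : ℝ) 1 ∧
      ∀ i, (∫ x in (⋃ j, Set.Icc (a j) (b j)), f i x) = α := by
  choose μ hfin hatoms hμ using fun i =>
    exists_measureReal_eq_setIntegral (hf_nonneg i) (hf_int i)
  obtain ⟨a, b, hsub, hshare⟩ := stromquist_woodall_general μ zero_le_one hα
  refine ⟨_, a, b, (Fintype.card_fin n).le, hsub, fun i => ?_⟩
  rw [← hμ i _ hsub (.iUnion fun _ => measurableSet_Icc), hshare i,
    hμ i _ subset_rfl measurableSet_Icc, hf_norm, mul_one]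
end
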